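/- arXiv:2212.02554 — 5 statements merged into one kernel-verified Lean document; each statement's English description precedes it below -/
import Mathlib

section
/- Let R be a commutative Noetherian ring and let i : M → I be a morphism of R-modules. Then the following are equivalent: (1) i is an injective envelope; (2) the morphism Hom_R(i,E) : Hom_R(I,E) → Hom_R(M,E) is a flat cover for some injective cogenerator E; (3) the morphism Hom_R(i,E) is a flat cover for every injective R-module E. -/
universe u

variable (R : Type u) [CommRing R]

/-- A morphism `f : F → M` with `F` flat is a flat precover if every morphism from a
flat module to `M` factors through `f`. -/
def IsFlatPrecover {F M : Type u} [AddCommGroup F] [AddCommGroup M] [Module R F]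
    [Module R M] (f : F →ₗ[R] M) : Prop :=
  Module.Flat R F ∧
    ∀ (F' : Type u) [AddCommGroup F'] [Module R F'], Module.Flat R F' →
      ∀ g : F' →ₗ[R] M, ∃ h : F' →ₗ[R] F, f ∘ₗ h = g

/-- A flat precover `f : F → M` is a flat cover if every `h : F → F` with `f ∘ h = f`
is an automorphism. -/
def IsFlatCover {F M : Type u} [AddCommGroup F] [AddCommGroup M] [Module R F]
    [Module R M] (f : F →ₗ[R] M) : Prop :=
  IsFlatPrecover R f ∧ ∀ h : F →ₗ[R] F, f ∘ₗ h = f → Function.Bijective h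

/-- A morphism `i : M → E` is an injective envelope if `E` is injective, `i` is
injective, and the image of `i` is an essential submodule of `E`. -/
def IsInjectiveEnvelope {M E : Type u} [AddCommGroup M] [AddCommGroup E] [Module R M]
    [Module R E] (i : M →ₗ[R] E) : Prop :=
  Module.Injective R E ∧ Function.Injective i ∧
    ∀ N : Submodule R E, N ≠ ⊥ → N ⊓ LinearMap.range i ≠ ⊥

/-- An injective cogenerator is an injective module `E` such that `Hom(N, E) ≠ 0`
for every nonzero module `N`. -/
def IsInjectiveCogenerator (E : Type u) [AddCommGroup E] [Module R E] : Prop :=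
  Module.Injective R E ∧
    ∀ (N : Type u) [AddCommGroup N] [Module R N], (∃ x : N, x ≠ 0) →
      ∃ g : N →ₗ[R] E, g ≠ 0

section helpers

variable {R}
variable {M I E : Type u} [AddCommGroup M] [AddCommGroup I] [AddCommGroup E]
  [Module R M] [Module R I] [Module R E]

theorem aux_factor {A B : Type u} [AddCommGroup A] [AddCommGroup B] [Module R A] [Module R B]
    (hE : Module.Injective R E) (φ : A →ₗ[R] B) (f : A →ₗ[R] E)
    (h : ∀ x, φ x = 0 → f x = 0) : ∃ g : B →ₗ[R] E, ∀ x, g (φ x) = f x := by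
  have hle : LinearMap.ker φ ≤ LinearMap.ker f := fun x hx => h x hx
  obtain ⟨g, hg⟩ := hE.out ((LinearMap.ker φ).liftQ φ le_rfl)
    (LinearMap.ker_eq_bot.mp (Submodule.ker_liftQ_eq_bot _ _ _ le_rfl))
    ((LinearMap.ker φ).liftQ f hle)
  exact ⟨g, fun x => by simpa using hg (Submodule.Quotient.mk x)⟩

theorem aux_pi_apply {n : ℕ} (g : (Fin n → I) →ₗ[R] E) (y : Fin n → I) :
    g y = ∑ j, g (Pi.single j (y j)) := by
  conv_lhs => rw [← Finset.univ_sum_single y]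
  rw [map_sum]

theorem aux_ann (hE : Module.Injective R E) {n : ℕ} (r : Fin n → R) (f : I →ₗ[R] E)
    (h : ∀ x, (∀ j, r j • x = 0) → f x = 0) :
    ∃ g : Fin n → (I →ₗ[R] E), f = ∑ j, r j • g j := by
  obtain ⟨g, hg⟩ := aux_factor hE (LinearMap.pi fun j => r j • (LinearMap.id : I →ₗ[R] I)) f
    (fun x hx => h x fun j => by simpa using congrFun hx j)
  refine ⟨fun j => g ∘ₗ LinearMap.single R (fun _ => I) j, ?_⟩
  ext x
  rw [← hg x, aux_pi_apply]
  simp [Pi.single_smul]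

theorem aux_flat [IsNoetherianRing R] (hI : Module.Injective R I) (hE : Module.Injective R E) :
    Module.Flat R (I →ₗ[R] E) := by
  refine Module.Flat.of_forall_isTrivialRelation ?_
  intro l r f hf
  -- the syzygies
  let ρ : (Fin l → R) →ₗ[R] R := ∑ j, r j • LinearMap.proj j
  have hρ : ∀ v, ρ v = ∑ j, r j * v j := fun v => by simp [ρ]
  obtain ⟨m, a, ha⟩ := Submodule.fg_iff_exists_fin_generating_family.mp
    (IsNoetherian.noetherian (LinearMap.ker ρ))
  have hak : ∀ k, ∑ j, r j * a k j = 0 := fun k => by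
    rw [← hρ]
    have : a k ∈ LinearMap.ker ρ := ha ▸ Submodule.subset_span ⟨k, rfl⟩
    exact this
  let A : (Fin l → I) →ₗ[R] (Fin m → I) :=
    LinearMap.pi fun k => ∑ j, a k j • LinearMap.proj j
  have hA : ∀ y k, A y k = ∑ j, a k j • y j := fun y k => by simp [A]
  let F : (Fin l → I) →ₗ[R] E := ∑ j, f j ∘ₗ LinearMap.proj j
  have hF : ∀ y, F y = ∑ j, f j (y j) := fun y => by simp [F]
  have key : ∀ y, A y = 0 → F y = 0 := by
    intro y hy
    let Y : (Fin l → R) →ₗ[R] I := ∑ j, (LinearMap.proj j : (Fin l → R) →ₗ[R] R).smulRight (y j)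
    have hY : ∀ v, Y v = ∑ j, v j • y j := fun v => by simp [Y]
    have hle : LinearMap.ker ρ ≤ LinearMap.ker Y := by
      rw [← ha, Submodule.span_le]
      rintro _ ⟨k, rfl⟩
      have := congrFun hy k
      rw [hA] at this
      simpa [hY] using this
    obtain ⟨g, hg⟩ := aux_factor hI ρ Y hle
    have hy' : ∀ j, y j = r j • g 1 := fun j => by
      have := hg (Pi.single j 1)
      rw [hρ, hY] at this
      simp only [Pi.single_apply, mul_ite, mul_one, mul_zero, ite_smul, one_smul, zero_smul,
        Finset.sum_ite_eq', Finset.mem_univ, if_true] at this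
      rw [← this, ← map_smul, smul_eq_mul, mul_one]
    rw [hF]
    have := LinearMap.congr_fun hf (g 1)
    simp only [LinearMap.sum_apply, LinearMap.smul_apply, LinearMap.zero_apply] at this
    rw [← this]
    refine Finset.sum_congr rfl fun j _ => ?_
    rw [hy' j, map_smul]
  obtain ⟨g, hg⟩ := aux_factor hE A F key
  refine ⟨m, fun j k => a k j, fun k => g ∘ₗ LinearMap.single R (fun _ => I) k, ?_, hak⟩
  intro j
  ext x
  have h1 := hg (Pi.single j x)
  rw [hF, aux_pi_apply] at h1
  have h2 : ∑ j', f j' ((Pi.single j x : Fin l → I) j') = f j x := by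
    rw [Finset.sum_eq_single j]
    · simp
    · intro b _ hb
      simp [Pi.single_eq_of_ne hb]
    · simp
  have h3 : ∀ k, A (Pi.single j x) k = a k j • x := by
    intro k
    rw [hA, Finset.sum_eq_single j]
    · simp
    · intro b _ hb
      simp [Pi.single_eq_of_ne hb]
    · simp
  rw [h2] at h1
  rw [← h1]
  simp [h3, Pi.single_smul]

theorem aux_key [IsNoetherianRing R] (hE : Module.Injective R E) (i : M →ₗ[R] I)
    (hess : ∀ N : Submodule R I, N ≠ ⊥ → N ⊓ LinearMap.range i ≠ ⊥)
    (h : (I →ₗ[R] E) →ₗ[R] (I →ₗ[R] E)) (hh : LinearMap.lcomp R E i ∘ₗ h = LinearMap.lcomp R E i)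
    {n : ℕ} (s : Fin n → R) (f : I →ₗ[R] E) (hf : ∀ x, (∀ j, s j • x = 0) → h f x = 0) :
    ∀ x, (∀ j, s j • x = 0) → f x = 0 := by
  have hM : ∀ (g : I →ₗ[R] E) (z : I), z ∈ LinearMap.range i → h g z = g z := by
    rintro g _ ⟨m, rfl⟩
    exact LinearMap.congr_fun (LinearMap.congr_fun hh g) m
  by_contra! hcon
  let colon : I → Ideal R := fun x => (LinearMap.range i).comap (LinearMap.toSpanSingleton R I x)
  have hcolon : ∀ x c, c ∈ colon x ↔ c • x ∈ LinearMap.range i := fun x c => Iff.rfl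
  let S : Set (Ideal R) := colon '' {x | (∀ j, s j • x = 0) ∧ f x ≠ 0}
  obtain ⟨x0, hx0⟩ := hcon
  obtain ⟨L, ⟨x, ⟨hxs, hfx⟩, rfl⟩, hmax⟩ :=
    set_has_maximal_iff_noetherian.mpr (inferInstance : IsNoetherian R R) S ⟨_, x0, hx0, rfl⟩
  obtain ⟨m, t, ht⟩ := Submodule.fg_iff_exists_fin_generating_family.mp
    (IsNoetherian.noetherian (colon x))
  have htmem : ∀ j, t j • x ∈ LinearMap.range i := fun j =>
    (hcolon x (t j)).mp (ht ▸ Submodule.subset_span ⟨j, rfl⟩)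
  have hvan : ∀ y, (∀ j, t j • y = 0) → f y = 0 := by
    intro y hy
    by_contra hfy
    have hann : ∀ c ∈ colon x, c • y = 0 := by
      have : colon x ≤ LinearMap.ker (LinearMap.toSpanSingleton R I y) := by
        rw [← ht, Submodule.span_le]
        rintro _ ⟨j, rfl⟩
        simpa using hy j
      intro c hc
      simpa using this hc
    have hys : ∀ j, s j • y = 0 := fun j => hann _ ((hcolon x _).mpr (by rw [hxs j]; exact zero_mem _))
    have hle : colon x ≤ colon y := fun c hc => (hcolon y c).mpr (by rw [hann c hc]; exact zero_mem _)
    have heq : colon y ≤ colon x := by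
      by_contra hne
      exact hmax (colon y) ⟨y, ⟨hys, hfy⟩, rfl⟩ (lt_of_le_not_ge hle hne)
    have hy0 : y ≠ 0 := fun h0 => hfy (by rw [h0, map_zero])
    refine hess (Submodule.span R {y}) (by simpa using hy0) ?_
    rw [eq_bot_iff]
    rintro z ⟨hz1, hz2⟩
    obtain ⟨c, rfl⟩ := Submodule.mem_span_singleton.mp hz1
    exact hann c (heq ((hcolon y c).mpr hz2))
  obtain ⟨g, hg⟩ := aux_ann hE t f hvan
  have : h f x = f x := by
    rw [hg, map_sum]
    simp only [map_smul, LinearMap.sum_apply, LinearMap.smul_apply]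
    refine Finset.sum_congr rfl fun j _ => ?_
    rw [← map_smul, hM _ _ (htmem j), map_smul]
  exact hfx (this ▸ hf x hxs)

theorem aux_inj [IsNoetherianRing R] (hE : Module.Injective R E) (i : M →ₗ[R] I)
    (hess : ∀ N : Submodule R I, N ≠ ⊥ → N ⊓ LinearMap.range i ≠ ⊥)
    (h : (I →ₗ[R] E) →ₗ[R] (I →ₗ[R] E))
    (hh : LinearMap.lcomp R E i ∘ₗ h = LinearMap.lcomp R E i) : Function.Injective h := by
  rw [← LinearMap.ker_eq_bot, LinearMap.ker_eq_bot']
  intro f hf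
  ext x
  exact aux_key hE i hess h hh (n := 0) (fun _ => 0) f (fun x _ => by rw [hf]; rfl) x
    (fun j => j.elim0)

open TensorProduct in
theorem aux_bij [IsNoetherianRing R] (hI : Module.Injective R I)
    (hE : Module.Injective R E) (i : M →ₗ[R] I)
    (hess : ∀ N : Submodule R I, N ≠ ⊥ → N ⊓ LinearMap.range i ≠ ⊥)
    (h : (I →ₗ[R] E) →ₗ[R] (I →ₗ[R] E))
    (hh : LinearMap.lcomp R E i ∘ₗ h = LinearMap.lcomp R E i) : Function.Bijective h := by
  have hinj := aux_inj hE i hess h hh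
  have hflat : Module.Flat R (I →ₗ[R] E) := aux_flat hI hE
  have hQ : Module.Flat R ((I →ₗ[R] E) ⧸ LinearMap.range h) := by
    refine Module.Flat.of_forall_isTrivialRelation ?_
    intro l r q hq
    choose f hf using fun j => Submodule.Quotient.mk_surjective (LinearMap.range h) (q j)
    have h1 : (∑ j, r j • f j) ∈ LinearMap.range h := by
      rw [← Submodule.Quotient.mk_eq_zero, ← hq, ← Submodule.mkQ_apply, map_sum]
      simp [hf]
    obtain ⟨f', hf'⟩ := h1
    obtain ⟨g, hg⟩ := aux_ann hE r f' (aux_key hE i hess h hh r f' (fun x hx => by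
      rw [hf']
      simp only [LinearMap.sum_apply, LinearMap.smul_apply]
      refine Finset.sum_eq_zero fun j _ => ?_
      rw [← map_smul, hx j, map_zero]))
    have h2 : ∑ j, r j • (f j - h (g j)) = 0 := by
      simp only [smul_sub, Finset.sum_sub_distrib]
      rw [← hf', hg, map_sum]
      simp
    obtain ⟨k, a, y, hy1, hy2⟩ := Module.Flat.isTrivialRelation_of_sum_smul_eq_zero h2
    refine ⟨k, a, fun k => Submodule.Quotient.mk (y k), fun j => ?_, hy2⟩
    have h3 := congrArg (LinearMap.range h).mkQ (hy1 j)
    rw [map_sub, map_sum] at h3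
    have h4 : (LinearMap.range h).mkQ (h (g j)) = 0 := by simp
    rw [h4, sub_zero] at h3
    rw [← hf j]
    simpa using h3
  have htens : Function.Injective (h.lTensor I) :=
    LinearMap.lTensor_injective_of_exact_of_flat (LinearMap.range h).mkQ
      (Submodule.mkQ_surjective _) h hinj (LinearMap.exact_map_mkQ_range h) I
  obtain ⟨ρ, hρ⟩ := hE.out (h.lTensor I)
    htens (TensorProduct.lift (LinearMap.id : (I →ₗ[R] E) →ₗ[R] (I →ₗ[R] E)).flip)
  let r : (I →ₗ[R] E) →ₗ[R] (I →ₗ[R] E) := (TensorProduct.curry ρ).flip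
  have hr : ∀ f, r (h f) = f := by
    intro f
    ext x
    simpa [r] using hρ (x ⊗ₜ f)
  have hhM : ∀ f, LinearMap.lcomp R E i (h f) = LinearMap.lcomp R E i f :=
    fun f => LinearMap.congr_fun hh f
  let r' : (I →ₗ[R] E) →ₗ[R] (I →ₗ[R] E) := r + (LinearMap.id - h ∘ₗ r)
  have hr' : ∀ f, r' f = r f + (f - h (r f)) := fun f => rfl
  have hr'inj : Function.Injective r' := by
    refine aux_inj hE i hess r' (LinearMap.ext fun f => ?_)
    rw [LinearMap.comp_apply, hr', map_add, map_sub, hhM]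
    abel
  refine ⟨hinj, fun f => ⟨r' f, hr'inj ?_⟩⟩
  rw [hr' (h (r' f)), hr]
  abel

open TensorProduct in
theorem aux_one_three [IsNoetherianRing R] (i : M →ₗ[R] I) (hi : IsInjectiveEnvelope R i)
    (hE : Module.Injective R E) : IsFlatCover R (LinearMap.lcomp R E i) := by
  obtain ⟨hI, hinj, hess⟩ := hi
  refine ⟨⟨aux_flat hI hE, ?_⟩, fun h hh => aux_bij hI hE i hess h hh⟩
  intro F _ _ hF g
  obtain ⟨ρ, hρ⟩ := hE.out (i.lTensor F)
    (Module.Flat.lTensor_preserves_injective_linearMap i hinj) (TensorProduct.lift g)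
  refine ⟨TensorProduct.curry ρ, ?_⟩
  ext x m
  simpa using hρ (x ⊗ₜ m)

theorem aux_sep (hE : IsInjectiveCogenerator R E) (N : Submodule R I) (x : I) (hx : x ∉ N) :
    ∃ f : I →ₗ[R] E, (∀ y ∈ N, f y = 0) ∧ f x ≠ 0 := by
  let q : I ⧸ N := Submodule.Quotient.mk x
  have hq : q ≠ 0 := by simpa [q] using hx
  obtain ⟨g, hg⟩ := hE.2 (Submodule.span R {q})
    ⟨⟨q, Submodule.mem_span_singleton_self q⟩, fun h => hq (congrArg Subtype.val h)⟩
  obtain ⟨g', hg'⟩ := hE.1.out (Submodule.span R {q}).subtype Subtype.val_injective g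
  refine ⟨g' ∘ₗ N.mkQ, fun y hy => ?_, fun h0 => hg ?_⟩
  · simp [(Submodule.Quotient.mk_eq_zero N).mpr hy]
  · ext ⟨z, hz⟩
    obtain ⟨c, rfl⟩ := Submodule.mem_span_singleton.mp hz
    rw [← hg']
    have : g' q = 0 := h0
    simp [this]

theorem aux_baer [IsNoetherianRing R] (hE : IsInjectiveCogenerator R E)
    (hF : Module.Flat R (I →ₗ[R] E)) : Module.Injective R I := by
  refine Module.Baer.injective ?_
  intro J φ
  obtain ⟨n, r, hr⟩ := Submodule.fg_iff_exists_fin_generating_family.mp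
    (IsNoetherian.noetherian J)
  have hrJ : ∀ j, r j ∈ J := fun j => hr ▸ Submodule.subset_span ⟨j, rfl⟩
  let D : I →ₗ[R] (Fin n → I) := LinearMap.pi fun j => r j • (LinearMap.id : I →ₗ[R] I)
  let y : Fin n → I := fun j => φ ⟨r j, hrJ j⟩
  have hy : y ∈ LinearMap.range D := by
    by_contra hcon
    obtain ⟨f, hf0, hfy⟩ := aux_sep hE (LinearMap.range D) y hcon
    apply hfy
    have hrel : ∑ j, r j • (f ∘ₗ LinearMap.single R (fun _ => I) j) = 0 := by
      ext x
      have h1 := hf0 (D x) ⟨x, rfl⟩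
      rw [aux_pi_apply] at h1
      simpa [D, Pi.single_smul] using h1
    obtain ⟨k, a, g, hg1, hg2⟩ := Module.Flat.isTrivialRelation_of_sum_smul_eq_zero hrel
    have h2 : ∀ j z, f (Pi.single j z) = ∑ l, a j l • g l z := fun j z => by
      have := LinearMap.congr_fun (hg1 j) z
      simpa using this
    rw [aux_pi_apply]
    simp only [h2]
    rw [Finset.sum_comm]
    refine Finset.sum_eq_zero fun l _ => ?_
    have h3 : ∑ j, a j l • y j = 0 := by
      have : ∑ j, a j l • y j = φ (∑ j, a j l • (⟨r j, hrJ j⟩ : J)) := by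
        rw [map_sum]
        exact Finset.sum_congr rfl fun j _ => (map_smul φ _ _).symm
      rw [this]
      convert map_zero φ
      apply Subtype.ext
      have := hg2 l
      simp only [mul_comm (r _)] at this
      simpa using this
    calc ∑ j, a j l • g l (y j) = g l (∑ j, a j l • y j) := by rw [map_sum]; simp
      _ = 0 := by rw [h3, map_zero]
  obtain ⟨x, hx⟩ := hy
  refine ⟨LinearMap.toSpanSingleton R I x, ?_⟩
  have hle : J ≤ (LinearMap.eqLocus ((LinearMap.toSpanSingleton R I x) ∘ₗ J.subtype) φ).map J.subtype := by
    conv_lhs => rw [← hr]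
    rw [Submodule.span_le]
    rintro _ ⟨j, rfl⟩
    refine ⟨⟨r j, hrJ j⟩, ?_, rfl⟩
    simpa [D, y] using congrFun hx j
  intro c hc
  obtain ⟨⟨c', hc'⟩, h1, rfl⟩ := hle hc
  exact h1

theorem aux_two_one [IsNoetherianRing R] (i : M →ₗ[R] I) (hE : IsInjectiveCogenerator R E)
    (hc : IsFlatCover R (LinearMap.lcomp R E i)) : IsInjectiveEnvelope R i := by
  obtain ⟨⟨hflat, hpre⟩, hcov⟩ := hc
  have hI : Module.Injective R I := aux_baer hE hflat
  have hinj : Function.Injective i := by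
    rw [← LinearMap.ker_eq_bot, LinearMap.ker_eq_bot']
    intro m hm
    by_contra hm0
    obtain ⟨f, -, hf⟩ := aux_sep hE (⊥ : Submodule R M) m (by simpa using hm0)
    obtain ⟨h, hh⟩ := hpre R inferInstance (LinearMap.toSpanSingleton R _ f)
    have h1 := LinearMap.congr_fun (LinearMap.congr_fun hh 1) m
    apply hf
    simpa [hm] using h1.symm
  refine ⟨hI, hinj, fun N hN hbot => hN ?_⟩
  rw [eq_bot_iff]
  intro x hx
  by_contra hx0
  obtain ⟨e, he⟩ := hI.out (N.mkQ ∘ₗ i) (by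
    rw [← LinearMap.ker_eq_bot, LinearMap.ker_eq_bot']
    intro m hm
    have h1 : i m ∈ N := by simpa using hm
    have h2 : i m ∈ N ⊓ LinearMap.range i := ⟨h1, m, rfl⟩
    rw [hbot] at h2
    exact hinj (by simpa using h2)) i
  obtain ⟨f, -, hf⟩ := aux_sep hE (⊥ : Submodule R I) x hx0
  obtain ⟨g, hg⟩ := (hcov (LinearMap.lcomp R E (e ∘ₗ N.mkQ)) (by
    ext g m
    have := he m
    simp only [LinearMap.comp_apply] at this
    simp only [LinearMap.comp_apply, LinearMap.lcomp_apply]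
    rw [this])).2 f
  apply hf
  rw [← hg]
  simp [(Submodule.Quotient.mk_eq_zero N).mpr hx]

theorem aux_cogen : IsInjectiveCogenerator R (CharacterModule R) := by
  refine ⟨Module.Flat.iff_characterModule_injective.mp inferInstance, ?_⟩
  rintro N _ _ ⟨x, hx⟩
  obtain ⟨c, hc⟩ := CharacterModule.exists_character_apply_ne_zero_of_ne_zero hx
  refine ⟨CharacterModule.curry (CharacterModule.congr (TensorProduct.rid R N).symm c), ?_⟩
  intro h0
  apply hc
  have h1 := DFunLike.congr_fun (LinearMap.congr_fun h0 x) (1 : R)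
  have h2 : c (TensorProduct.rid R N (TensorProduct.tmul R x (1 : R))) = 0 := h1
  simpa using h2

end helpers

/-- Over a commutative Noetherian ring, `i : M → I` is an injective
envelope iff `Hom_R(i, E)` is a flat cover for some injective cogenerator `E`, iff
`Hom_R(i, E)` is a flat cover for every injective module `E`. -/
theorem injectiveEnvelope_iff_dual_flatCover [IsNoetherianRing R]
    {M I : Type u} [AddCommGroup M] [AddCommGroup I] [Module R M] [Module R I]
    (i : M →ₗ[R] I) :
    (IsInjectiveEnvelope R i ↔
      ∃ (E : Type u) (_ : AddCommGroup E) (_ : Module R E),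
        IsInjectiveCogenerator R E ∧ IsFlatCover R (LinearMap.lcomp R E i)) ∧
    (IsInjectiveEnvelope R i ↔
      ∀ (E : Type u) [AddCommGroup E] [Module R E], Module.Injective R E →
        IsFlatCover R (LinearMap.lcomp R E i)) := by
  have h13 : IsInjectiveEnvelope R i → ∀ (E : Type u) [AddCommGroup E] [Module R E],
      Module.Injective R E → IsFlatCover R (LinearMap.lcomp R E i) :=
    fun hi E _ _ hE => aux_one_three i hi hE
  refine ⟨⟨fun hi => ⟨CharacterModule R, inferInstance, inferInstance, aux_cogen,
    h13 hi _ aux_cogen.1⟩, ?_⟩, h13, fun h3 => aux_two_one i aux_cogen (h3 _ aux_cogen.1)⟩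
  rintro ⟨E, _, _, hE, hc⟩
  exact aux_two_one i hE hc
end

section
/- Let R be a commutative Noetherian ring and let p : F → M be an epimorphism of R-modules where F is flat and cotorsion. Then p is a flat cover if and only if ker p is cotorsion and the induced map k(p) ⊗_{R_p} Hom_R(R_p, p) : k(p) ⊗_{R_p} Hom_R(R_p, F) → k(p) ⊗_{R_p} Hom_R(R_p, M) is an isomorphism for all p ∈ Spec R. -/
universe u

variable (R : Type u) [CommRing R]

open CategoryTheory

/-- A module `C` is cotorsion if `Ext¹(F, C) = 0` for every flat module `F`. -/
def IsCotorsion (C : Type u) [AddCommGroup C] [Module R C] : Prop :=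
  ∀ (F : Type u) [AddCommGroup F] [Module R F], Module.Flat R F →
    Subsingleton (((Ext R (ModuleCat.{u} R) 1).obj
      (Opposite.op (ModuleCat.of R F))).obj (ModuleCat.of R C))

/-- The `A`-module structure on `Hom_R(X, M)` for an `R`-algebra `A` and an `A`-module
`X`, given by `(a • f) x = f (a • x)`. -/
noncomputable instance (priority := 50) LinearMap.domSMulModule (A : Type u) [CommRing A] [Algebra R A]
    (X : Type u) [AddCommGroup X] [Module R X] [Module A X] [IsScalarTower R A X]
    (M : Type u) [AddCommGroup M] [Module R M] : Module A (X →ₗ[R] M) where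
  smul a f := f ∘ₗ (a • (LinearMap.id : X →ₗ[R] X))
  one_smul f := LinearMap.ext fun x => by
    show f ((1 : A) • x) = f x
    rw [one_smul]
  mul_smul a b f := LinearMap.ext fun x => by
    show f ((a * b) • x) = f (b • a • x)
    rw [mul_comm, mul_smul]
  smul_zero a := rfl
  smul_add a f g := rfl
  add_smul a b f := LinearMap.ext fun x => by
    show f ((a + b) • x) = f (a • x) + f (b • x)
    rw [add_smul, map_add]
  zero_smul f := LinearMap.ext fun x => by
    show f ((0 : A) • x) = 0
    rw [zero_smul, map_zero]

/-- Postcomposition `Hom_R(A, F) → Hom_R(A, M)` with `f : F → M`, as an `A`-linear map. -/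
noncomputable def LinearMap.domHomPostcomp (A : Type u) [CommRing A] [Algebra R A]
    {F M : Type u} [AddCommGroup F] [AddCommGroup M] [Module R F] [Module R M]
    (f : F →ₗ[R] M) : (A →ₗ[R] F) →ₗ[A] (A →ₗ[R] M) where
  toFun g := f ∘ₗ g
  map_add' g h := LinearMap.ext fun x => by simp
  map_smul' a g := LinearMap.ext fun x => rfl


namespace FlatCov

variable {R}

/-- factor through a surjection -/
lemma exists_factor {X B C : Type*} [AddCommGroup X] [AddCommGroup B] [AddCommGroup C]
    [Module R X] [Module R B] [Module R C] (s : X →ₗ[R] B) (hs : Function.Surjective s)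
    (φ : X →ₗ[R] C) (h : ∀ x, s x = 0 → φ x = 0) : ∃ ψ : B →ₗ[R] C, ∀ x, ψ (s x) = φ x := by
  refine ⟨(Submodule.liftQ (LinearMap.ker s) φ (fun x hx => h x hx)) ∘ₗ
    (s.quotKerEquivOfSurjective hs).symm.toLinearMap, fun x => ?_⟩
  have : (s.quotKerEquivOfSurjective hs).symm (s x) = Submodule.Quotient.mk x := by
    rw [LinearEquiv.symm_apply_eq]; rfl
  simp only [LinearMap.comp_apply, LinearEquiv.coe_coe, this]
  exact Submodule.liftQ_apply _ _ _

/-- extension property. -/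
def EP (R : Type u) [CommRing R] (C : Type u) [AddCommGroup C] [Module R C] : Prop :=
  ∀ (G P : Type u) [AddCommGroup G] [Module R G] [AddCommGroup P] [Module R P],
    Module.Flat R G → Module.Projective R P → ∀ π : P →ₗ[R] G, Function.Surjective π →
    ∀ f : LinearMap.ker π →ₗ[R] C, ∃ f' : P →ₗ[R] C, ∀ k : LinearMap.ker π, f' k = f k

lemma ext_iff (G C : Type u) [AddCommGroup G] [Module R G] [AddCommGroup C] [Module R C]
    (Q : ProjectiveResolution (ModuleCat.of R G)) :
    Subsingleton (((Ext R (ModuleCat.{u} R) 1).obj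
      (Opposite.op (ModuleCat.of R G))).obj (ModuleCat.of R C)) ↔
    ∀ φ : Q.complex.X 1 ⟶ ModuleCat.of R C, Q.complex.d 2 1 ≫ φ = 0 →
      ∃ ψ : Q.complex.X 0 ⟶ ModuleCat.of R C, Q.complex.d 1 0 ≫ ψ = φ := by
  rw [← ModuleCat.isZero_iff_subsingleton, (Q.isoExt (R := R) 1 (ModuleCat.of R C)).isZero_iff,
    ← HomologicalComplex.exactAt_iff_isZero_homology,
    HomologicalComplex.exactAt_iff' _ 0 1 2 (by simp) (by simp),
    ShortComplex.moduleCat_exact_iff]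
  rfl

lemma res_facts (G : Type u) [AddCommGroup G] [Module R G]
    (Q : ProjectiveResolution (ModuleCat.of R G)) :
    ∃ ε : Q.complex.X 0 →ₗ[R] G, Function.Surjective ε ∧
      (∀ x, ε ((Q.complex.d 1 0).hom x) = 0) ∧
      (∀ x, ε x = 0 → ∃ y, (Q.complex.d 1 0).hom y = x) ∧
      (∀ x, (Q.complex.d 1 0).hom x = 0 → ∃ y, (Q.complex.d 2 1).hom y = x) := by
  have h0 := Q.exact₀
  have h1 := Q.exact_succ 0
  have hs : Function.Surjective (Q.π.f 0).hom :=
    (ModuleCat.epi_iff_surjective _).1 inferInstance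
  rw [ShortComplex.moduleCat_exact_iff] at h0 h1
  refine ⟨(Q.π.f 0).hom, hs, fun x => ?_, fun x hx => h0 x hx, fun x hx => h1 x hx⟩
  have := Q.complex_d_comp_π_f_zero
  exact congr(($this).hom x)

lemma isCotorsion_iff (C : Type u) [AddCommGroup C] [Module R C] :
    IsCotorsion R C ↔ EP R C := by
  constructor
  · intro hC G P _ _ _ _ hG hP π hπ f
    obtain ⟨Q⟩ : Nonempty (ProjectiveResolution (ModuleCat.of R G)) :=
      (inferInstance : HasProjectiveResolution _).out
    obtain ⟨ε, hε, h1, h2, h3⟩ := res_facts G Q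
    have hext := (ext_iff G C Q).1 (hC G hG)
    have hp0 : Module.Projective R (Q.complex.X 0) :=
      (IsProjective.iff_projective _).2 (Q.projective 0)
    obtain ⟨j, hj⟩ := Module.projective_lifting_property π ε hπ
    obtain ⟨l, hl⟩ := Module.projective_lifting_property ε π hε
    have hj' : ∀ x, π (j x) = ε x := fun x => congr($hj x)
    have hl' : ∀ x, ε (l x) = π x := fun x => congr($hl x)
    let d1 : Q.complex.X 1 →ₗ[R] LinearMap.ker π :=
      (j ∘ₗ (Q.complex.d 1 0).hom).codRestrict _ (fun x => by
        simp [hj', h1])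
    obtain ⟨ψ, hψ⟩ := hext (ModuleCat.ofHom (f ∘ₗ d1)) (by
      ext x
      have : d1 ((Q.complex.d 2 1).hom x) = 0 := by
        apply Subtype.ext
        have := Q.complex.d_comp_d 2 1 0
        have : (Q.complex.d 1 0).hom ((Q.complex.d 2 1).hom x) = 0 := congr(($this).hom x)
        simp [d1, this]
      simp [this])
    have hψ' : ∀ x, ψ.hom ((Q.complex.d 1 0).hom x) = f (d1 x) := fun x => congr(($hψ).hom x)
    let r : P →ₗ[R] LinearMap.ker π := (LinearMap.id - j ∘ₗ l).codRestrict _ (fun x => by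
        simp [hj', hl'])
    refine ⟨ψ.hom ∘ₗ l + f ∘ₗ r, fun k => ?_⟩
    obtain ⟨y, hy⟩ := h2 (l k) (by rw [hl']; exact k.2)
    have : d1 y + r k = k := by
      apply Subtype.ext
      simp [d1, r, hy]
    simp only [LinearMap.add_apply, LinearMap.comp_apply]
    rw [← hy, hψ', ← map_add, this]
  · intro hC G _ _ hG
    obtain ⟨Q⟩ : Nonempty (ProjectiveResolution (ModuleCat.of R G)) :=
      (inferInstance : HasProjectiveResolution _).out
    obtain ⟨ε, hε, h1, h2, h3⟩ := res_facts G Q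
    rw [ext_iff G C Q]
    intro φ hφ
    have hp0 : Module.Projective R (Q.complex.X 0) :=
      (IsProjective.iff_projective _).2 (Q.projective 0)
    let d1 : Q.complex.X 1 →ₗ[R] LinearMap.ker ε :=
      (Q.complex.d 1 0).hom.codRestrict _ (fun x => h1 x)
    obtain ⟨f, hf⟩ := exists_factor d1 (fun x => by
      obtain ⟨y, hy⟩ := h2 x x.2
      exact ⟨y, Subtype.ext hy⟩) φ.hom (fun x hx => by
        obtain ⟨y, rfl⟩ := h3 x (congrArg Subtype.val hx)
        exact congr(($hφ).hom y))
    obtain ⟨f', hf'⟩ := hC G _ hG hp0 ε hε f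
    refine ⟨ModuleCat.ofHom f', ?_⟩
    ext x
    exact (hf' (d1 x)).trans (hf x)

/-- lifting property of modules with `EP`. -/
lemma EP.lift {U B C G : Type u} [AddCommGroup U] [Module R U] [AddCommGroup B] [Module R B]
    [AddCommGroup C] [Module R C] [AddCommGroup G] [Module R G] (hU : EP R U)
    (hG : Module.Flat R G) (i : U →ₗ[R] B) (hi : Function.Injective i)
    (b : B →ₗ[R] C) (hb : Function.Surjective b) (hib : ∀ x, b x = 0 ↔ ∃ y, i y = x)
    (γ : G →ₗ[R] C) : ∃ δ : G →ₗ[R] B, ∀ x, b (δ x) = γ x := by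
  let π : (G →₀ R) →ₗ[R] G := Finsupp.linearCombination R id
  have hπ : Function.Surjective π := Finsupp.linearCombination_id_surjective R G
  obtain ⟨l, hl⟩ := Module.projective_lifting_property b (γ ∘ₗ π) hb
  have hl' : ∀ x, b (l x) = γ (π x) := fun x => congr($hl x)
  let e := LinearEquiv.ofInjective i hi
  let k : LinearMap.ker π →ₗ[R] LinearMap.range i :=
    (l ∘ₗ (LinearMap.ker π).subtype).codRestrict _ (fun x => by
      have : b (l x) = 0 := by rw [hl', show π x = 0 from x.2, map_zero]
      exact (hib _).1 this)
  obtain ⟨f, hf⟩ := hU G (G →₀ R) hG inferInstance π hπ (e.symm.toLinearMap ∘ₗ k)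
  have hbi : ∀ y, b (i y) = 0 := fun y => (hib _).2 ⟨y, rfl⟩
  obtain ⟨δ, hδ⟩ := exists_factor π hπ (l - i ∘ₗ f) (fun x hx => by
    have h1 := hf ⟨x, hx⟩
    simp only [LinearMap.sub_apply, LinearMap.comp_apply, sub_eq_zero]
    rw [show f x = _ from h1]
    have : e (e.symm (k ⟨x, hx⟩)) = k ⟨x, hx⟩ := e.apply_symm_apply _
    exact (congrArg Subtype.val this).symm)
  refine ⟨δ, fun x => ?_⟩
  obtain ⟨y, rfl⟩ := hπ x
  simp [hδ, hbi, hl']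

/-- extension along monos with flat cokernel -/
lemma EP.extend {C A B W : Type u} [AddCommGroup C] [Module R C] [AddCommGroup A] [Module R A]
    [AddCommGroup B] [Module R B] [AddCommGroup W] [Module R W] (hC : EP R C)
    (i : A →ₗ[R] B) (hi : Function.Injective i) (w : B →ₗ[R] W) (hw : Function.Surjective w)
    (hiw : ∀ x, w x = 0 ↔ ∃ y, i y = x) (hW : Module.Flat R W) (f : A →ₗ[R] C) :
    ∃ f' : B →ₗ[R] C, ∀ a, f' (i a) = f a := by
  let π : (W →₀ R) →ₗ[R] W := Finsupp.linearCombination R id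
  have hπ : Function.Surjective π := Finsupp.linearCombination_id_surjective R W
  obtain ⟨l, hl⟩ := Module.projective_lifting_property w π hw
  have hl' : ∀ x, w (l x) = π x := fun x => congr($hl x)
  let e := LinearEquiv.ofInjective i hi
  let k : LinearMap.ker π →ₗ[R] LinearMap.range i :=
    (l ∘ₗ (LinearMap.ker π).subtype).codRestrict _ (fun x => by
      have : w (l x) = 0 := by rw [hl']; exact x.2
      exact (hiw _).1 this)
  have hk : ∀ x, i (e.symm (k x)) = l x := fun x => by
    have : e (e.symm (k x)) = k x := e.apply_symm_apply _
    exact (congrArg Subtype.val this)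
  obtain ⟨u, hu⟩ := hC W (W →₀ R) hW inferInstance π hπ (f ∘ₗ e.symm.toLinearMap ∘ₗ k)
  have hwi : ∀ y, w (i y) = 0 := fun y => (hiw _).2 ⟨y, rfl⟩
  obtain ⟨δ, hδ⟩ := exists_factor (i.coprod l) (fun b => by
      obtain ⟨p, hp⟩ := hπ (w b)
      obtain ⟨a, ha⟩ := (hiw (b - l p)).1 (by simp [hl', hp])
      exact ⟨(a, p), by simp [ha]⟩) (f.coprod u) (fun x hx => by
    obtain ⟨a, p⟩ := x
    simp only [LinearMap.coprod_apply] at hx ⊢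
    have hp : π p = 0 := by
      have := congrArg w hx
      simpa [hwi, hl'] using this
    have h1 := hu ⟨p, hp⟩
    rw [show u p = _ from h1]
    have h2 := hk ⟨p, hp⟩
    have h3 : a = - (e.symm (k ⟨p, hp⟩)) := by
      apply hi
      rw [map_neg, h2]
      exact eq_neg_of_add_eq_zero_left hx
    simp [h3])
  exact ⟨δ, fun a => by simpa using hδ (a, 0)⟩

lemma EP.of_retract {C D : Type u} [AddCommGroup C] [Module R C] [AddCommGroup D] [Module R D]
    (hD : EP R D) (i : C →ₗ[R] D) (r : D →ₗ[R] C) (h : ∀ x, r (i x) = x) : EP R C := by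
  intro G P _ _ _ _ hG hP π hπ f
  obtain ⟨f', hf'⟩ := hD G P hG hP π hπ (i ∘ₗ f)
  exact ⟨r ∘ₗ f', fun k => by simp [hf', h]⟩

lemma EP.character (Z : Type u) [AddCommGroup Z] [Module R Z] : EP R (CharacterModule Z) := by
  intro G P _ _ _ _ hG hP π hπ f
  have h : Function.Injective ((LinearMap.ker π).subtype.rTensor Z) := by
    rw [← LinearMap.lTensor_inj_iff_rTensor_inj]
    exact LinearMap.lTensor_injective_of_exact_of_flat π hπ _ Subtype.val_injective
      (LinearMap.exact_subtype_ker_map π) Z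
  obtain ⟨f', hf'⟩ := rTensor_injective_iff_lcomp_surjective.1 h f
  exact ⟨f', fun k => congr($hf' k)⟩

/-- maps from flat modules to character modules lift along duals of injections -/
lemma character_lift {G Y Y' : Type u} [AddCommGroup G] [Module R G] [AddCommGroup Y] [Module R Y]
    [AddCommGroup Y'] [Module R Y'] (hG : Module.Flat R G) (i : Y →ₗ[R] Y')
    (hi : Function.Injective i) (g : G →ₗ[R] CharacterModule Y) :
    ∃ g' : G →ₗ[R] CharacterModule Y', ∀ x y, g' x (i y) = g x y := by
  have h : Function.Injective (i.rTensor G) := Module.Flat.rTensor_preserves_injective_linearMap i hi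
  let sw : Y →ₗ[R] CharacterModule G :=
    { toFun := fun y => (AddMonoidHom.eval y).comp (g.toAddMonoidHom : G →+ (Y →+ _))
      map_add' := fun y y' => by ext x; exact (g x).map_add y y'
      map_smul' := fun r y => by
        ext x
        change g x (r • y) = g (r • x) y
        rw [g.map_smul]; rfl }
  obtain ⟨s, hs⟩ := rTensor_injective_iff_lcomp_surjective.1 h sw
  let g' : G →ₗ[R] CharacterModule Y' :=
    { toFun := fun x => (AddMonoidHom.eval x).comp (s.toAddMonoidHom : Y' →+ (G →+ _))
      map_add' := fun y y' => by ext x; exact (s x).map_add y y'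
      map_smul' := fun r y => by
        ext x
        change s x (r • y) = s (r • x) y
        rw [s.map_smul]; rfl }
  exact ⟨g', fun x y => congr($hs y x)⟩

end FlatCov

namespace FlatCov

variable {R}

lemma mem_span_smul {n : ℕ} (f : Fin n → R) {M : Type*} [AddCommGroup M] [Module R M] (x : M) :
    x ∈ Ideal.span (Set.range f) • (⊤ : Submodule R M) ↔ ∃ y : Fin n → M, x = ∑ i, f i • y i := by
  constructor
  · intro hx
    refine Submodule.smul_induction_on hx ?_ ?_
    · intro r hr m _
      obtain ⟨c, rfl⟩ := (Ideal.mem_span_range_iff_exists_fun).1 hr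
      refine ⟨fun i => c i • m, ?_⟩
      rw [Finset.sum_smul]
      refine Finset.sum_congr rfl fun i _ => ?_
      rw [mul_comm, mul_smul]
    · rintro x y ⟨a, rfl⟩ ⟨b, rfl⟩
      exact ⟨a + b, by simp [Finset.sum_add_distrib]⟩
  · rintro ⟨y, rfl⟩
    exact Submodule.sum_mem _ fun i _ =>
      Submodule.smul_mem_smul (Ideal.subset_span ⟨i, rfl⟩) trivial

lemma exists_gen [IsNoetherianRing R] (I : Ideal R) :
    ∃ (n : ℕ) (f : Fin n → R), Ideal.span (Set.range f) = I :=
  Submodule.fg_iff_exists_fin_generating_family.1 (IsNoetherian.noetherian I)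

lemma map_mem_smul {M N : Type*} [AddCommGroup M] [Module R M] [AddCommGroup N] [Module R N]
    (I : Ideal R) (g : M →ₗ[R] N) {x : M} (hx : x ∈ I • (⊤ : Submodule R M)) :
    g x ∈ I • (⊤ : Submodule R N) := by
  have : g x ∈ (I • (⊤ : Submodule R M)).map g := ⟨x, hx, rfl⟩
  rw [Submodule.map_smul''] at this
  exact Submodule.smul_mono le_rfl le_top this

lemma flat_colon [IsNoetherianRing R] {F : Type*} [AddCommGroup F] [Module R F]
    (hF : Module.Flat R F) (I J : Ideal R) (a : R) (hJ : ∀ c, a * c ∈ I → c ∈ J) (z : F)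
    (hz : a • z ∈ I • (⊤ : Submodule R F)) : z ∈ J • (⊤ : Submodule R F) := by
  obtain ⟨n, f, rfl⟩ := exists_gen I
  obtain ⟨y, hy⟩ := (mem_span_smul f _).1 hz
  have hrel : ∑ o : Option (Fin n), (o.elim a (fun i => - f i)) • (o.elim z y) = 0 := by
    simp [Fintype.sum_option, hy]
  obtain ⟨k, c, w, h1, h2⟩ := Module.Flat.isTrivialRelation_of_sum_smul_eq_zero hrel
  have hz' := h1 none
  simp only [Option.elim] at hz'
  rw [hz']
  refine Submodule.sum_mem _ fun j _ => Submodule.smul_mem_smul (hJ _ ?_) trivial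
  have := h2 j
  simp only [Fintype.sum_option, Option.elim, neg_mul, Finset.sum_neg_distrib] at this
  rw [add_neg_eq_zero] at this
  rw [this]
  exact Ideal.sum_mem _ fun i _ => Ideal.mul_mem_right _ _ (Ideal.subset_span ⟨i, rfl⟩)

lemma flat_of_pure {A B W : Type*} [AddCommGroup A] [Module R A]
    [AddCommGroup B] [Module R B] [AddCommGroup W] [Module R W]
    (hB : Module.Flat R B) (i : A →ₗ[R] B) (w : B →ₗ[R] W) (hw : Function.Surjective w)
    (hiw : ∀ x, w x = 0 ↔ ∃ y, i y = x)
    (hpure : ∀ I : Ideal R, ∀ a, i a ∈ I • (⊤ : Submodule R B) → a ∈ I • (⊤ : Submodule R A)) :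
    Module.Flat R W := by
  apply Module.Flat.of_forall_isTrivialRelation
  intro l f x hx
  choose b hb using fun j => hw (x j)
  obtain ⟨a, ha⟩ := (hiw (∑ j, f j • b j)).1 (by simp [hb, hx])
  obtain ⟨y, hy⟩ := (mem_span_smul f a).1 (hpure _ a (by
    rw [ha, mem_span_smul]; exact ⟨b, rfl⟩))
  obtain ⟨k, c, z, h1, h2⟩ := Module.Flat.isTrivialRelation_of_sum_smul_eq_zero
    (f := f) (x := fun j => b j - i (y j)) (by
      simp only [smul_sub, Finset.sum_sub_distrib, ← map_smul, ← map_sum]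
      rw [← hy, ha, sub_self])
  refine ⟨k, c, fun j => w (z j), fun j => ?_, h2⟩
  have := congrArg w (h1 j)
  rw [map_sub, (hiw _).2 ⟨_, rfl⟩, sub_zero, hb] at this
  simp [this]

lemma char_factor {A B : Type*} [AddCommGroup A] [Module R A] [AddCommGroup B] [Module R B]
    (Θ : A →ₗ[R] B) (X : CharacterModule A) (h : ∀ a, Θ a = 0 → X a = 0) :
    ∃ Y : CharacterModule B, ∀ a, Y (Θ a) = X a := by
  let X' : CharacterModule (A ⧸ LinearMap.ker Θ) :=
    QuotientAddGroup.lift (LinearMap.ker Θ).toAddSubgroup X (fun a ha => h a ha)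
  have hinj : Function.Injective ((LinearMap.ker Θ).liftQ Θ le_rfl) :=
    LinearMap.ker_eq_bot.1 (Submodule.ker_liftQ_eq_bot _ _ _ le_rfl)
  obtain ⟨Y, hY⟩ := CharacterModule.dual_surjective_of_injective _ hinj X'
  exact ⟨Y, fun a => congr($hY (Submodule.Quotient.mk a))⟩

lemma csum {B : Type*} [AddCommGroup B] {k : ℕ} (c : Fin k → CharacterModule B) (b : B) :
    (∑ i, c i) b = ∑ i, c i b :=
  AddMonoidHom.finsetSum_apply _ _ _

lemma flat_character [IsNoetherianRing R] {E : Type u} [AddCommGroup E] [Module R E]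
    (hE : Module.Injective R E) : Module.Flat R (CharacterModule E) := by
  apply Module.Flat.of_forall_isTrivialRelation
  intro l f x hx
  let s : (Fin l → R) →ₗ[R] R := ∑ i, f i • LinearMap.proj i
  have hs : ∀ b, s b = ∑ i, f i * b i := fun b => by simp [s]
  obtain ⟨m, a, ha⟩ := Submodule.fg_iff_exists_fin_generating_family.1
    (IsNoetherian.noetherian (LinearMap.ker s))
  let Θ : (Fin l → E) →ₗ[R] (Fin m → E) :=
    LinearMap.pi fun j => ∑ i, a j i • LinearMap.proj i
  have hΘ : ∀ v j, Θ v j = ∑ i, a j i • v i := fun v j => by simp [Θ]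
  have key : ∀ v, Θ v = 0 → ∃ w : E, ∀ i, v i = f i • w := by
    intro v hv
    let φ : (Fin l → R) →ₗ[R] E := ∑ i, (LinearMap.toSpanSingleton R E (v i)) ∘ₗ LinearMap.proj i
    have hφ : ∀ b, φ b = ∑ i, b i • v i := fun b => by simp [φ]
    have hker : LinearMap.ker s ≤ LinearMap.ker φ := by
      rw [← ha, Submodule.span_le]
      rintro _ ⟨j, rfl⟩
      change φ (a j) = 0
      rw [hφ, ← hΘ, hv]; rfl
    obtain ⟨ψ, hψ⟩ := exists_factor s.rangeRestrict s.surjective_rangeRestrict φ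
      (fun b hb => hker (by simpa using congrArg Subtype.val hb))
    obtain ⟨ψ', hψ'⟩ := hE.out (LinearMap.range s).subtype Subtype.val_injective ψ
    refine ⟨ψ' 1, fun i => ?_⟩
    have h1 := hψ' (s.rangeRestrict (Pi.single i 1))
    rw [hψ, hφ] at h1
    have h2 : s (Pi.single i 1) = f i := by simp [hs, Pi.single_apply]
    have h3 : (∑ k, (Pi.single i (1 : R) : Fin l → R) k • v k) = v i := by
      simp [Pi.single_apply]
    rw [h3] at h1
    rw [← h1, ← map_smul]
    simp [h2]
  let X : CharacterModule (Fin l → E) :=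
    (∑ i, CharacterModule.dual (LinearMap.proj (R := R) (φ := fun _ : Fin l => E) i) (x i))
  have hsum : ∀ {B : Type u} [AddCommGroup B] {k : ℕ} (c : Fin k → CharacterModule B) (b : B),
      (∑ i, c i) b = ∑ i, c i b := fun c b => by
    exact AddMonoidHom.finsetSum_apply _ _ _
  have hX : ∀ v, X v = ∑ i, x i (v i) := fun v => by
    simp only [X, hsum]; rfl
  obtain ⟨Y, hY⟩ := char_factor Θ X (fun v hv => by
    obtain ⟨w, hw⟩ := key v hv
    have := congr($hx w)
    rw [hsum] at this
    rw [hX]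
    simp only [hw]
    exact this)
  refine ⟨m, fun i j => a j i, fun j => CharacterModule.dual (LinearMap.single R (fun _ => E) j) Y,
    fun i => ?_, fun j => ?_⟩
  · ext e
    rw [hsum]
    have h1 := hY (Pi.single i e)
    rw [hX] at h1
    have h2 : ∑ k, x k ((Pi.single i e : Fin l → E) k) = x i e := by
      rw [Finset.sum_eq_single i]
      · simp
      · intro k _ hk; simp [hk]
      · simp
    rw [h2] at h1
    rw [← h1]
    have h3 : Θ (Pi.single i e) = ∑ j, Pi.single j (a j i • e) := by
      ext j
      rw [hΘ, Finset.sum_apply, Finset.sum_eq_single i, Finset.sum_eq_single j]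
      · simp
      · intro k _ hk; simp [hk.symm]
      · simp
      · intro k _ hk; simp [hk]
      · simp
    rw [h3, map_sum]
    rfl
  · have : a j ∈ LinearMap.ker s := by rw [← ha]; exact Submodule.subset_span ⟨j, rfl⟩
    rw [← hs]; exact this

/-- evaluation map to double dual -/
noncomputable def ev (F : Type u) [AddCommGroup F] [Module R F] :
    F →ₗ[R] CharacterModule (CharacterModule F) where
  toFun x := AddMonoidHom.eval (M := F) (N := AddCircle (1 : ℚ)) x
  map_add' x y := by
    ext c
    exact AddMonoidHom.map_add c x y
  map_smul' r x := rfl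

lemma exists_retract [IsNoetherianRing R] {F : Type u} [AddCommGroup F] [Module R F]
    (hF : Module.Flat R F) (hC : EP R F) :
    ∃ ρ : CharacterModule (CharacterModule F) →ₗ[R] F, ∀ x, ρ (ev (R := R) F x) = x := by
  have hinj : Module.Injective R (CharacterModule F) := Module.Flat.iff_characterModule_injective.1 hF
  have hfl := flat_character hinj
  have hev : ∀ (x : F) (c : CharacterModule F), ev (R := R) F x c = c x := fun _ _ => rfl
  have hi : Function.Injective (ev (R := R) F) := by
    rw [injective_iff_map_eq_zero]
    intro x hx
    exact CharacterModule.eq_zero_of_character_apply fun c => by rw [← hev, hx]; rfl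
  have hW := flat_of_pure hfl (ev (R := R) F) (LinearMap.range (ev (R := R) F)).mkQ
    (Submodule.mkQ_surjective _) (fun x => by simp) (fun I x hx => by
      obtain ⟨n, f, rfl⟩ := exists_gen I
      set I := Ideal.span (Set.range f) with hI
      rw [← Submodule.Quotient.mk_eq_zero]
      refine CharacterModule.eq_zero_of_character_apply fun c => ?_
      let c' : CharacterModule F := CharacterModule.dual (I • (⊤ : Submodule R F)).mkQ c
      change c' x = 0
      rw [← hev]
      obtain ⟨y, hy⟩ := (mem_span_smul f _).1 hx
      rw [hy]
      refine (AddMonoidHom.finsetSum_apply _ _ _).trans (Finset.sum_eq_zero fun i _ => ?_)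
      have h0 : f i • c' = 0 := by
        ext z
        change c (Submodule.Quotient.mk (f i • z)) = 0
        have hm : f i • z ∈ I • (⊤ : Submodule R F) :=
          Submodule.smul_mem_smul (Ideal.subset_span ⟨i, rfl⟩) trivial
        rw [(Submodule.Quotient.mk_eq_zero _).2 hm]
        exact AddMonoidHom.map_zero c
      change y i (f i • c') = 0
      rw [h0]
      exact AddMonoidHom.map_zero _)
  exact hC.extend (ev (R := R) F) hi _ (Submodule.mkQ_surjective _) (fun x => by simp) hW
    LinearMap.id

section retract

variable {F X : Type u} [AddCommGroup F] [Module R F] [AddCommGroup X]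
  [Module R X] (ι : F →ₗ[R] CharacterModule X) (ρ : CharacterModule X →ₗ[R] F)
  (hρ : ∀ x, ρ (ι x) = x)

/-- multiplication by several elements -/
noncomputable def Th {n : ℕ} (f : Fin n → R) (X : Type u) [AddCommGroup X] [Module R X] :
    X →ₗ[R] (Fin n → X) := LinearMap.pi fun i => f i • LinearMap.id

lemma Th_sum {n : ℕ} (f : Fin n → R) (Y : CharacterModule (Fin n → X)) (x : X) :
    Y (Th f X x) = (∑ i, f i • CharacterModule.dual (LinearMap.single R (fun _ => X) i) Y :
      CharacterModule X) x := by
  have h3 : Th f X x = ∑ j, Pi.single j (f j • x) := by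
    ext j
    rw [Finset.sum_apply, Finset.sum_eq_single j]
    · simp [Th]
    · intro k _ hk; simp [hk.symm]
    · simp
  rw [h3, map_sum, csum]
  rfl

lemma char_mem {n : ℕ} (f : Fin n → R) (ξ : CharacterModule X)
    (h : ∀ x, (∀ i, f i • x = 0) → ξ x = 0) :
    ξ ∈ Ideal.span (Set.range f) • (⊤ : Submodule R (CharacterModule X)) := by
  obtain ⟨Y, hY⟩ := char_factor (Th f X) ξ (fun x hx => h x fun i => congrFun hx i)
  rw [mem_span_smul]
  refine ⟨fun i => CharacterModule.dual (LinearMap.single R (fun _ => X) i) Y, ?_⟩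
  ext x
  rw [← hY, Th_sum]

lemma char_vanish {n : ℕ} (f : Fin n → R) (ξ : CharacterModule X)
    (hξ : ξ ∈ Ideal.span (Set.range f) • (⊤ : Submodule R (CharacterModule X)))
    (x : X) (hx : ∀ i, f i • x = 0) : ξ x = 0 := by
  obtain ⟨y, rfl⟩ := (mem_span_smul f _).1 hξ
  refine (AddMonoidHom.finsetSum_apply _ _ _).trans (Finset.sum_eq_zero fun i _ => ?_)
  change y i (f i • x) = 0
  rw [hx]; exact AddMonoidHom.map_zero _

include hρ in
lemma quot_data [IsNoetherianRing R] (I : Ideal R) : ∃ (Z : Submodule R X)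
    (bar : (F ⧸ (I • (⊤ : Submodule R F))) →ₗ[R] CharacterModule Z)
    (r : CharacterModule Z →ₗ[R] (F ⧸ (I • (⊤ : Submodule R F)))),
    (∀ x, r (bar x) = x) ∧
    ∀ ξ, r (CharacterModule.dual Z.subtype ξ) = Submodule.Quotient.mk (ρ ξ) := by
  obtain ⟨n, f, rfl⟩ := exists_gen I
  let Z : Submodule R X := LinearMap.ker (Th f X)
  have hZ : ∀ x : Z, ∀ i, f i • (x : X) = 0 := fun x i => congrFun (show Th f X x = 0 from x.2) i
  obtain ⟨r, hr⟩ := exists_factor (CharacterModule.dual (R := R) Z.subtype)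
    (CharacterModule.dual_surjective_of_injective _ Subtype.val_injective)
    ((Submodule.mkQ _) ∘ₗ ρ) (fun ξ hξ => by
      refine (Submodule.Quotient.mk_eq_zero _).2 (map_mem_smul _ ρ (char_mem f ξ fun x hx => ?_))
      exact congr($hξ ⟨x, funext hx⟩))
  let bar : (F ⧸ (Ideal.span (Set.range f) • (⊤ : Submodule R F))) →ₗ[R] CharacterModule Z :=
    Submodule.liftQ _ (CharacterModule.dual Z.subtype ∘ₗ ι) (fun x hx => by
      ext z
      exact char_vanish f (ι x) (map_mem_smul _ ι hx) z (hZ z))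
  refine ⟨Z, bar, r, fun x => ?_, hr⟩
  obtain ⟨x, rfl⟩ := Submodule.Quotient.mk_surjective _ x
  have : bar (Submodule.Quotient.mk x) = CharacterModule.dual Z.subtype (ι x) :=
    Submodule.liftQ_apply _ _ _
  rw [this, hr]
  simp [hρ]

include hρ in
lemma EP_quot [IsNoetherianRing R] (I : Ideal R) : EP R (F ⧸ (I • (⊤ : Submodule R F))) := by
  obtain ⟨Z, bar, r, h, -⟩ := quot_data ι ρ hρ I
  exact (EP.character Z).of_retract bar r h

include hρ in
lemma lift_mod [IsNoetherianRing R] (I : Ideal R) {G : Type u} [AddCommGroup G] [Module R G] (hG : Module.Flat R G)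
    (g : G →ₗ[R] (F ⧸ (I • (⊤ : Submodule R F)))) :
    ∃ g' : G →ₗ[R] F, ∀ x, Submodule.Quotient.mk (g' x) = g x := by
  obtain ⟨Z, bar, r, h, h'⟩ := quot_data ι ρ hρ I
  obtain ⟨g', hg'⟩ := character_lift hG Z.subtype Subtype.val_injective (bar ∘ₗ g)
  refine ⟨ρ ∘ₗ g', fun x => ?_⟩
  rw [LinearMap.comp_apply, ← h', ← h (g x)]
  congr 1
  ext z
  exact hg' x z

include hρ in
lemma hom_mem {n : ℕ} (f : Fin n → R) {G : Type u} [AddCommGroup G] [Module R G]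
    (hG : Module.Flat R G) (g : G →ₗ[R] F)
    (hg : ∀ x, g x ∈ Ideal.span (Set.range f) • (⊤ : Submodule R F)) :
    ∃ g' : Fin n → (G →ₗ[R] F), g = ∑ i, f i • g' i := by
  let D := CharacterModule.dual (Th f X)
  let N := LinearMap.range (Th f X)
  let γ : G →ₗ[R] LinearMap.range D := (ι ∘ₗ g).codRestrict _ (fun y => by
    obtain ⟨Y, hY⟩ := char_factor (Th f X) (ι (g y)) (fun x hx =>
      char_vanish f _ (map_mem_smul _ ι (hg y)) x fun i => congrFun hx i)
    refine ⟨Y, ?_⟩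
    ext x
    exact hY x)
  obtain ⟨δ, hδ⟩ := (EP.character ((Fin n → X) ⧸ N)).lift hG (CharacterModule.dual N.mkQ)
    (CharacterModule.dual_injective_of_surjective _ (Submodule.mkQ_surjective _))
    D.rangeRestrict D.surjective_rangeRestrict (fun Y => by
      constructor
      · intro hY
        obtain ⟨Y', hY'⟩ := char_factor N.mkQ Y (fun a ha => by
          obtain ⟨x, rfl⟩ : a ∈ N := by simpa using ha
          exact congr(($hY).1 x))
        exact ⟨Y', by ext x; exact hY' x⟩
      · rintro ⟨Y', rfl⟩
        apply Subtype.ext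
        ext x
        change Y' (Submodule.Quotient.mk (Th f X x)) = 0
        have hm : Th f X x ∈ N := ⟨x, rfl⟩
        rw [(Submodule.Quotient.mk_eq_zero _).2 hm]
        exact AddMonoidHom.map_zero _) γ
  refine ⟨fun i => ρ ∘ₗ CharacterModule.dual (LinearMap.single R (fun _ => X) i) ∘ₗ δ, ?_⟩
  ext y
  have h1 : D (δ y) = ι (g y) := congrArg Subtype.val (hδ y)
  have h2 : D (δ y) = ∑ i, f i • CharacterModule.dual (LinearMap.single R (fun _ => X) i) (δ y) := by
    ext x
    exact Th_sum f (δ y) x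
  rw [← hρ (g y), ← h1, h2, map_sum, LinearMap.sum_apply]
  refine Finset.sum_congr rfl fun i _ => ?_
  rw [map_smul]; rfl

end retract

end FlatCov

namespace FlatCov

variable {R}

lemma ideal_ind [IsNoetherianRing R] (P : Ideal R → Prop) (top : P ⊤)
    (prime : ∀ q : Ideal R, q.IsPrime → (∀ J, q < J → P J) → P q)
    (step : ∀ (I : Ideal R) (a : R) (J : Ideal R), (∀ c, a * c ∈ I ↔ c ∈ J) →
      P (I ⊔ Ideal.span {a}) → P J → P I) (I : Ideal R) : P I := by
  induction I using WellFoundedGT.induction with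
  | ind I ih =>
    by_cases ht : I = ⊤
    · rw [ht]; exact top
    by_cases hp : I.IsPrime
    · exact prime I hp ih
    rw [Ideal.isPrime_iff] at hp
    push Not at hp
    obtain ⟨a, b, hab, ha, hb⟩ := hp ht
    let J : Ideal R := Submodule.comap (LinearMap.mulLeft R a) I
    have hJ : ∀ c, a * c ∈ I ↔ c ∈ J := fun c => Iff.rfl
    refine step I a J hJ (ih _ ?_) (ih _ ?_)
    · refine lt_of_le_of_ne le_sup_left fun h => ha ?_
      rw [h]
      exact Ideal.mem_sup_right (Ideal.mem_span_singleton_self a)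
    · refine lt_of_le_of_ne (fun c hc => (hJ c).1 (I.mul_mem_left a hc)) fun h => hb ?_
      rw [h]
      exact (hJ b).1 hab

lemma mem_sup_smul {M : Type*} [AddCommGroup M] [Module R M] (I : Ideal R) (a : R) (x : M) :
    x ∈ (I ⊔ Ideal.span {a}) • (⊤ : Submodule R M) ↔
      ∃ i ∈ I • (⊤ : Submodule R M), ∃ x', x = i + a • x' := by
  rw [Submodule.sup_smul, Submodule.mem_sup]
  constructor
  · rintro ⟨i, hi, y, hy, rfl⟩
    rw [Submodule.ideal_span_singleton_smul] at hy
    obtain ⟨x', -, rfl⟩ := hy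
    exact ⟨i, hi, x', rfl⟩
  · rintro ⟨i, hi, x', rfl⟩
    exact ⟨i, hi, a • x', Submodule.smul_mem_smul (Ideal.mem_span_singleton_self a) trivial, rfl⟩

lemma colon_smul {M : Type*} [AddCommGroup M] [Module R M] (I J : Ideal R) (a : R)
    (hJ : ∀ c, a * c ∈ I ↔ c ∈ J) (x : M) (hx : x ∈ J • (⊤ : Submodule R M)) :
    a • x ∈ I • (⊤ : Submodule R M) := by
  refine Submodule.smul_induction_on hx ?_ ?_
  · intro c hc m _
    rw [← mul_smul]
    exact Submodule.smul_mem_smul ((hJ c).2 hc) trivial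
  · intro x y hx hy
    rw [smul_add]; exact add_mem hx hy

section loc

variable (q : Ideal R) [hq : q.IsPrime]

lemma loc_unit (s : R) (hs : s ∉ q) : IsUnit (algebraMap R (Localization.AtPrime q) s) :=
  IsLocalization.map_units (M := q.primeCompl) _ ⟨s, hs⟩

lemma loc_div (s : R) (hs : s ∉ q) (y : Localization.AtPrime q) : ∃ y', y = s • y' := by
  obtain ⟨v, hv⟩ := (loc_unit q s hs).exists_right_inv
  refine ⟨v * y, ?_⟩
  rw [Algebra.smul_def, ← mul_assoc, hv, one_mul]

lemma loc_cancel (s : R) (hs : s ∉ q) (y y' : Localization.AtPrime q) (h : s • y = s • y') :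
    y = y' := by
  rw [Algebra.smul_def, Algebra.smul_def] at h
  exact (loc_unit q s hs).mul_left_cancel h

lemma loc_surj (y : Localization.AtPrime q) :
    ∃ s, s ∉ q ∧ ∃ a : R, s • y = a • (1 : Localization.AtPrime q) := by
  obtain ⟨⟨a, s⟩, h⟩ := IsLocalization.surj q.primeCompl y
  refine ⟨s, s.2, a, ?_⟩
  rw [Algebra.smul_def, Algebra.smul_def, mul_one, mul_comm]
  exact h

lemma loc_map {A : Type*} [AddCommGroup A] [Module R A]
    (h : ∀ s, s ∉ q → Function.Bijective (fun x : A => s • x)) (x : A) :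
    ∃ g : Localization.AtPrime q →ₗ[R] A, g 1 = x := by
  let g := IsLocalizedModule.lift q.primeCompl (Algebra.linearMap R (Localization.AtPrime q))
    (LinearMap.toSpanSingleton R A x) (fun s => by
      rw [Module.End.isUnit_iff]
      exact h s s.2)
  refine ⟨g, ?_⟩
  have := IsLocalizedModule.lift_apply q.primeCompl (Algebra.linearMap R (Localization.AtPrime q))
    (LinearMap.toSpanSingleton R A x) (fun s => by
      rw [Module.End.isUnit_iff]
      exact h s s.2) 1
  simpa using this

lemma torsionfree [IsNoetherianRing R] {F : Type*} [AddCommGroup F] [Module R F]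
    (hF : Module.Flat R F) (q : Ideal R) (hq : q.IsPrime) (s : R) (hs : s ∉ q) (z : F)
    (hz : s • z ∈ q • (⊤ : Submodule R F)) : z ∈ q • (⊤ : Submodule R F) :=
  flat_colon hF q q s (fun _ hc => (hq.mem_or_mem hc).resolve_left hs) z hz

lemma pure_loc [IsNoetherianRing R] {F : Type*} [AddCommGroup F] [Module R F]
    (hF : Module.Flat R F) (g : Localization.AtPrime q →ₗ[R] F)
    (hg : g 1 ∉ q • (⊤ : Submodule R F)) (I : Ideal R) :
    ∀ y, g y ∈ I • (⊤ : Submodule R F) →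
      y ∈ I • (⊤ : Submodule R (Localization.AtPrime q)) := by
  induction I using ideal_ind with
  | top => intro y _; rw [Submodule.top_smul]; trivial
  | prime q' hq' ih =>
    intro y hy
    by_cases hle : q' ≤ q
    · obtain ⟨s, hs, a, ha⟩ := loc_surj q y
      obtain ⟨u, hu⟩ := loc_div q s hs 1
      have hy' : y = a • u := by
        apply loc_cancel q s hs
        rw [ha, smul_comm, ← hu]
      by_cases haq : a ∈ q'
      · rw [hy']; exact Submodule.smul_mem_smul haq trivial
      · exfalso
        apply hg
        refine Submodule.smul_mono hle le_rfl (torsionfree hF q' hq' a haq _ ?_)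
        rw [← map_smul, ← ha, map_smul]
        exact Submodule.smul_mem _ _ hy
    · obtain ⟨t, ht, htq⟩ := Set.not_subset.1 hle
      obtain ⟨u, hu⟩ := loc_div q t htq y
      rw [hu]; exact Submodule.smul_mem_smul ht trivial
  | step I a J hJ h1 h2 =>
    intro y hy
    obtain ⟨i, hi, z, rfl⟩ := (mem_sup_smul I a y).1
      (h1 y (Submodule.smul_mono le_sup_left le_rfl hy))
    refine add_mem hi (colon_smul I J a hJ z (h2 z ?_))
    refine flat_colon hF I J a (fun c => (hJ c).1) _ ?_
    rw [map_add, map_smul] at hy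
    exact (Submodule.add_mem_iff_right _ (map_mem_smul I g hi)).1 hy

lemma not_cover [IsNoetherianRing R] {F M : Type u} [AddCommGroup F] [Module R F]
    [AddCommGroup M] [Module R M] (p : F →ₗ[R] M)
    (hF : Module.Flat R F) (hK : EP R (LinearMap.ker p))
    (hcov : ∀ h : F →ₗ[R] F, p ∘ₗ h = p → Function.Bijective h)
    (g : Localization.AtPrime q →ₗ[R] F) (hpg : ∀ y, p (g y) = 0) :
    g 1 ∈ q • (⊤ : Submodule R F) := by
  by_contra hg
  have hpure := pure_loc q hF g hg
  have hinj : Function.Injective g := by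
    rw [injective_iff_map_eq_zero]
    intro y hy
    simpa using hpure ⊥ y (by simp [hy])
  have hex : ∀ x, (LinearMap.range g).mkQ x = 0 ↔ ∃ y, g y = x := fun x => by simp
  have hW := flat_of_pure hF g (LinearMap.range g).mkQ (Submodule.mkQ_surjective _) hex hpure
  obtain ⟨e, he⟩ := hK.extend g hinj _ (Submodule.mkQ_surjective _) hex hW
    (g.codRestrict _ hpg)
  have hb := hcov (LinearMap.id - (LinearMap.ker p).subtype ∘ₗ e) (by
    ext x
    have : p (e x) = 0 := (e x).2
    simp [this])
  have h0 : g 1 = 0 := hb.1 (by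
    rw [map_zero, LinearMap.sub_apply, LinearMap.comp_apply, he]
    exact sub_self (g 1))
  exact hg (by rw [h0]; exact zero_mem _)

end loc

section A

variable [IsNoetherianRing R] {F X : Type u} [AddCommGroup F] [Module R F] [AddCommGroup X]
  [Module R X]

lemma divisible_mem (ι : F →ₗ[R] CharacterModule X) (ρ : CharacterModule X →ₗ[R] F)
    (hρ : ∀ x, ρ (ι x) = x) (hF : Module.Flat R F) (e : F →ₗ[R] F) (q : Ideal R) [hq : q.IsPrime]
    (he : ∀ g : Localization.AtPrime q →ₗ[R] F, e (g 1) ∈ q • (⊤ : Submodule R F))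
    (x : F) (hx : ∀ r, r ∉ q → ∃ y, x - r • y ∈ q • (⊤ : Submodule R F)) :
    e x ∈ q • (⊤ : Submodule R F) := by
  set N := q • (⊤ : Submodule R F) with hN
  have htf : ∀ r, r ∉ q → ∀ z : F ⧸ N, r • z = 0 → z = 0 := by
    intro r hr z hz
    obtain ⟨z, rfl⟩ := Submodule.Quotient.mk_surjective _ z
    rw [← Submodule.Quotient.mk_smul, Submodule.Quotient.mk_eq_zero] at hz
    rw [Submodule.Quotient.mk_eq_zero]
    exact torsionfree hF q hq r hr z hz
  let D : Submodule R (F ⧸ N) :=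
    { carrier := {z | ∀ r, r ∉ q → ∃ y, z = r • y}
      add_mem' := fun {a b} ha hb r hr => by
        obtain ⟨y, rfl⟩ := ha r hr
        obtain ⟨y', rfl⟩ := hb r hr
        exact ⟨y + y', by rw [smul_add]⟩
      zero_mem' := fun r _ => ⟨0, by simp⟩
      smul_mem' := fun c a ha r hr => by
        obtain ⟨y, rfl⟩ := ha r hr
        exact ⟨c • y, by rw [smul_comm]⟩ }
  have hbij : ∀ s, s ∉ q → Function.Bijective (fun x : D => s • x) := by
    intro s hs
    constructor
    · intro a b hab
      have : s • ((a : F ⧸ N) - b) = 0 := by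
        rw [smul_sub, sub_eq_zero]
        exact congrArg Subtype.val hab
      exact Subtype.ext (sub_eq_zero.1 (htf s hs _ this))
    · intro a
      obtain ⟨y, hy⟩ := a.2 s hs
      refine ⟨⟨y, fun r hr => ?_⟩, Subtype.ext hy.symm⟩
      obtain ⟨z, hz⟩ := a.2 (s * r) (fun h => (hq.mem_or_mem h).elim hs hr)
      refine ⟨z, sub_eq_zero.1 (htf s hs _ ?_)⟩
      rw [smul_sub, ← hy, ← mul_smul, ← hz, sub_self]
  have hxD : (Submodule.Quotient.mk x : F ⧸ N) ∈ D := fun r hr => by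
    obtain ⟨y, hy⟩ := hx r hr
    exact ⟨Submodule.Quotient.mk y, by
      rw [← Submodule.Quotient.mk_smul, Submodule.Quotient.eq]; exact hy⟩
  obtain ⟨g, hg⟩ := loc_map (A := D) q hbij ⟨_, hxD⟩
  have hfl : Module.Flat R (Localization.AtPrime q) := IsLocalization.flat _ q.primeCompl
  obtain ⟨g', hg'⟩ := lift_mod ι ρ hρ q hfl (D.subtype ∘ₗ g)
  have h1 : x - g' 1 ∈ N := by
    rw [← Submodule.Quotient.eq, hg']
    simp [hg]
  have h2 := add_mem (map_mem_smul q e h1) (he g')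
  simpa using h2

lemma bij_core (ι : F →ₗ[R] CharacterModule X) (ρ : CharacterModule X →ₗ[R] F)
    (hρ : ∀ x, ρ (ι x) = x) (hF : Module.Flat R F) (e h : F →ₗ[R] F) (heh : ∀ x, x = h x + e x)
    (he : ∀ (q : Ideal R) (_ : q.IsPrime) (g : Localization.AtPrime q →ₗ[R] F),
      e (g 1) ∈ q • (⊤ : Submodule R F)) (I : Ideal R) :
    (∀ x, h x ∈ I • (⊤ : Submodule R F) → x ∈ I • (⊤ : Submodule R F)) ∧
    ∀ y, ∃ x, y - h x ∈ I • (⊤ : Submodule R F) := by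
  induction I using ideal_ind with
  | top => simp
  | step I a J hJ h1 h2 =>
    constructor
    · intro x hx
      obtain ⟨i, hi, z, rfl⟩ := (mem_sup_smul I a x).1
        (h1.1 x (Submodule.smul_mono le_sup_left le_rfl hx))
      refine add_mem hi (colon_smul I J a hJ z (h2.1 z ?_))
      refine flat_colon hF I J a (fun c => (hJ c).1) _ ?_
      rw [map_add, map_smul] at hx
      exact (Submodule.add_mem_iff_right _ (map_mem_smul I h hi)).1 hx
    · intro y
      obtain ⟨x, hx⟩ := h1.2 y
      obtain ⟨i, hi, z, hz⟩ := (mem_sup_smul I a _).1 hx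
      obtain ⟨x', hx'⟩ := h2.2 z
      refine ⟨x + a • x', ?_⟩
      have : y - h (x + a • x') = i + a • (z - h x') := by
        rw [map_add, map_smul, smul_sub, ← sub_sub, hz]; abel
      rw [this]
      exact add_mem hi (colon_smul I J a hJ _ hx')
  | prime q hq ih =>
    have hlt : ∀ r, r ∉ q → q < q ⊔ Ideal.span {r} := fun r hr =>
      lt_of_le_of_ne le_sup_left fun h => hr (by
        rw [h]; exact Ideal.mem_sup_right (Ideal.mem_span_singleton_self r))
    have hdiv := divisible_mem ι ρ hρ hF e q (he q hq)
    have hinj : ∀ x, h x ∈ q • (⊤ : Submodule R F) → x ∈ q • (⊤ : Submodule R F) := by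
      intro x hx
      rw [heh x]
      refine add_mem hx (hdiv x fun r hr => ?_)
      obtain ⟨i, hi, z, rfl⟩ := (mem_sup_smul q r x).1
        ((ih _ (hlt r hr)).1 x (Submodule.smul_mono le_sup_left le_rfl hx))
      exact ⟨z, by simpa using hi⟩
    refine ⟨hinj, fun y => ?_⟩
    set Q := q • (⊤ : Submodule R F) with hQ
    let N : Submodule R F := LinearMap.range h ⊔ Q
    have hN : ∀ z, z ∈ N ↔ ∃ x, z - h x ∈ Q := by
      intro z
      rw [Submodule.mem_sup]
      constructor
      · rintro ⟨_, ⟨x, rfl⟩, i, hi, rfl⟩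
        exact ⟨x, by simpa using hi⟩
      · rintro ⟨x, hx⟩
        exact ⟨h x, ⟨x, rfl⟩, _, hx, by abel⟩
    rw [← hN]
    have hbij : ∀ s, s ∉ q → Function.Bijective (fun x : F ⧸ N => s • x) := by
      intro s hs
      constructor
      · intro a b hab
        obtain ⟨a, rfl⟩ := Submodule.Quotient.mk_surjective _ a
        obtain ⟨b, rfl⟩ := Submodule.Quotient.mk_surjective _ b
        have h1 : s • (a - b) ∈ N := by
          rw [smul_sub, ← Submodule.Quotient.eq]; exact hab
        rw [Submodule.Quotient.eq]
        obtain ⟨x, hx⟩ := (hN _).1 h1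
        have hx2 : h x ∈ (q ⊔ Ideal.span {s}) • (⊤ : Submodule R F) := by
          rw [mem_sup_smul]
          exact ⟨_, neg_mem hx, a - b, by abel⟩
        obtain ⟨i, hi, x', rfl⟩ := (mem_sup_smul _ _ _).1 ((ih _ (hlt s hs)).1 x hx2)
        refine (hN _).2 ⟨x', torsionfree hF q hq s hs _ ?_⟩
        have : s • (a - b - h x') = (s • (a - b) - h (i + s • x')) + h i := by
          rw [map_add, map_smul, smul_sub]; abel
        rw [this]
        exact add_mem hx (map_mem_smul q h hi)
      · intro a
        obtain ⟨a, rfl⟩ := Submodule.Quotient.mk_surjective _ a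
        obtain ⟨x, hx⟩ := (ih _ (hlt s hs)).2 a
        obtain ⟨i, hi, z, hz⟩ := (mem_sup_smul _ _ _).1 hx
        refine ⟨Submodule.Quotient.mk z, ?_⟩
        change s • (Submodule.Quotient.mk z : F ⧸ N) = _
        rw [← Submodule.Quotient.mk_smul, eq_comm, Submodule.Quotient.eq]
        refine (hN _).2 ⟨x, ?_⟩
        have : a - s • z - h x = i := by
          rw [sub_right_comm, hz]; abel
        rw [this]; exact hi
    obtain ⟨γ, hγ⟩ := loc_map q hbij (Submodule.Quotient.mk y)
    have hfl : Module.Flat R (Localization.AtPrime q) := IsLocalization.flat _ q.primeCompl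
    have hQN : Q ≤ N := le_sup_right
    let b : (F ⧸ Q) →ₗ[R] (F ⧸ N) := Submodule.factor hQN
    let hb : (F ⧸ Q) →ₗ[R] (F ⧸ Q) := Q.mapQ Q h (fun x hx => map_mem_smul q h hx)
    obtain ⟨δ, hδ⟩ := (EP_quot ι ρ hρ q).lift hfl hb
      (by
        rw [injective_iff_map_eq_zero]
        intro x hx
        obtain ⟨x, rfl⟩ := Submodule.Quotient.mk_surjective _ x
        rw [Submodule.mapQ_apply, Submodule.Quotient.mk_eq_zero] at hx
        rw [Submodule.Quotient.mk_eq_zero]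
        exact hinj x hx) b (Submodule.factor_surjective hQN) (fun x => by
        obtain ⟨x, rfl⟩ := Submodule.Quotient.mk_surjective _ x
        change (Submodule.Quotient.mk x : F ⧸ N) = 0 ↔ _
        rw [Submodule.Quotient.mk_eq_zero, hN]
        constructor
        · rintro ⟨z, hz⟩
          refine ⟨Submodule.Quotient.mk z, ?_⟩
          rw [Submodule.mapQ_apply, eq_comm, Submodule.Quotient.eq]; exact hz
        · rintro ⟨z, hz⟩
          obtain ⟨z, rfl⟩ := Submodule.Quotient.mk_surjective _ z
          rw [Submodule.mapQ_apply, eq_comm, Submodule.Quotient.eq] at hz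
          exact ⟨z, hz⟩) γ
    obtain ⟨z, hz⟩ := Submodule.Quotient.mk_surjective _ (δ 1)
    have hez : e z ∈ Q := hdiv z fun r hr => by
      obtain ⟨u, hu⟩ := loc_div q r hr 1
      obtain ⟨w, hw⟩ := Submodule.Quotient.mk_surjective _ (δ u)
      refine ⟨w, ?_⟩
      rw [← Submodule.Quotient.eq, hz, Submodule.Quotient.mk_smul, hw, ← map_smul, ← hu]
    have hzN : z ∈ N := (hN z).2 ⟨z, by
      have : z - h z = e z := sub_eq_iff_eq_add'.2 (heh z)
      rw [this]; exact hez⟩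
    have h3 := hδ 1
    rw [hγ, ← hz] at h3
    change (Submodule.Quotient.mk z : F ⧸ N) = _ at h3
    rw [(Submodule.Quotient.mk_eq_zero _).2 hzN, eq_comm, Submodule.Quotient.mk_eq_zero] at h3
    exact h3

end A

section residue

variable {A : Type*} [CommRing A] [IsLocalRing A] {H H' : Type*} [AddCommGroup H] [Module A H]
  [AddCommGroup H'] [Module A H']

open IsLocalRing TensorProduct

lemma one_tmul_eq_zero (g : H) :
    ((1 : ResidueField A) ⊗ₜ[A] g : ResidueField A ⊗[A] H) = 0 ↔
      g ∈ maximalIdeal A • (⊤ : Submodule A H) := by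
  have key := (TensorProduct.quotTensorEquivQuotSMul H (maximalIdeal A)).map_eq_zero_iff
    (x := (Ideal.Quotient.mk (maximalIdeal A) 1) ⊗ₜ[A] g)
  rw [TensorProduct.quotTensorEquivQuotSMul_mk_tmul, Submodule.Quotient.mk_eq_zero, one_smul] at key
  exact key.symm

lemma exists_one_tmul (t : ResidueField A ⊗[A] H) : ∃ g : H, t = (1 : ResidueField A) ⊗ₜ[A] g := by
  induction t with
  | zero => exact ⟨0, by simp⟩
  | tmul x y =>
    obtain ⟨a, rfl⟩ := residue_surjective x
    refine ⟨a • y, ?_⟩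
    rw [← TensorProduct.smul_tmul, Algebra.smul_def, mul_one]; rfl
  | add x y hx hy =>
    obtain ⟨a, rfl⟩ := hx
    obtain ⟨b, rfl⟩ := hy
    exact ⟨a + b, by rw [TensorProduct.tmul_add]⟩

lemma residue_bij (φ : H →ₗ[A] H') (hφ : Function.Surjective φ)
    (h : ∀ g, φ g = 0 → g ∈ maximalIdeal A • (⊤ : Submodule A H)) :
    Function.Bijective (LinearMap.lTensor (ResidueField A) φ) := by
  refine ⟨?_, LinearMap.lTensor_surjective _ hφ⟩
  rw [injective_iff_map_eq_zero]
  intro t ht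
  obtain ⟨g, rfl⟩ := exists_one_tmul t
  rw [LinearMap.lTensor_tmul, one_tmul_eq_zero] at ht
  have htop : (⊤ : Submodule A H') = Submodule.map φ ⊤ := by
    rw [Submodule.map_top, LinearMap.range_eq_top.2 hφ]
  rw [htop, ← Submodule.map_smul''] at ht
  obtain ⟨g', hg', hgg⟩ := ht
  rw [one_tmul_eq_zero]
  have := add_mem (h (g - g') (by rw [map_sub, hgg, sub_self])) hg'
  simpa using this

lemma residue_inj (φ : H →ₗ[A] H')
    (h : Function.Injective (LinearMap.lTensor (ResidueField A) φ)) (g : H) (hg : φ g = 0) :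
    g ∈ maximalIdeal A • (⊤ : Submodule A H) := by
  rw [← one_tmul_eq_zero]
  apply h
  simp [hg]

end residue

lemma smul_dom (A : Type u) [CommRing A] [Algebra R A] {F : Type u} [AddCommGroup F] [Module R F]
    (a : A) (g : A →ₗ[R] F) (x : A) : (a • g) x = g (a • x) := rfl

end FlatCov

open FlatCov in
/-- Dailey. Over a commutative Noetherian ring, an epimorphism
`p : F → M` with `F` flat and cotorsion is a flat cover iff `ker p` is cotorsion and
`k(𝔭) ⊗_{R_𝔭} Hom_R(R_𝔭, p)` is an isomorphism for every prime `𝔭`. -/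
theorem flatCover_iff_cotorsion_ker_and_residue_bijective [IsNoetherianRing R]
    {F M : Type u} [AddCommGroup F] [AddCommGroup M] [Module R F] [Module R M]
    (p : F →ₗ[R] M) (hflat : Module.Flat R F) (hcot : IsCotorsion R F)
    (hsurj : Function.Surjective p) :
    IsFlatCover R p ↔
      (IsCotorsion R (LinearMap.ker p) ∧
        ∀ (𝔭 : Ideal R) (h𝔭 : 𝔭.IsPrime),
          Function.Bijective
            (LinearMap.lTensor (IsLocalRing.ResidueField (Localization.AtPrime 𝔭))
              (LinearMap.domHomPostcomp R (Localization.AtPrime 𝔭) p))) := by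
  constructor
  · rintro ⟨⟨-, hpre⟩, hcov⟩
    have hF : EP R F := (isCotorsion_iff F).1 hcot
    have hK : EP R (LinearMap.ker p) := by
      intro G P _ _ _ _ hG hP π hπ f
      obtain ⟨f', hf'⟩ := hF G P hG hP π hπ ((LinearMap.ker p).subtype ∘ₗ f)
      obtain ⟨γ, hγ⟩ := exists_factor π hπ (p ∘ₗ f') (fun x hx => by
        have h1 := hf' ⟨x, hx⟩
        have h2 : f' x = f ⟨x, hx⟩ := h1
        rw [LinearMap.comp_apply, h2]
        exact (f ⟨x, hx⟩).2)
      obtain ⟨δ, hδ⟩ := hpre G hG γ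
      have hδ' : ∀ x, p (δ x) = γ x := fun x => congr($hδ x)
      refine ⟨(f' - δ ∘ₗ π).codRestrict _ (fun x => by simp [hδ', hγ]), fun k => ?_⟩
      apply Subtype.ext
      have hk : π k = 0 := k.2
      simp [hk, hf']
    refine ⟨(isCotorsion_iff _).2 hK, fun q hq => ?_⟩
    obtain ⟨ρ, hρ⟩ := exists_retract hflat hF
    have hfl : Module.Flat R (Localization.AtPrime q) := IsLocalization.flat _ q.primeCompl
    refine residue_bij _ (fun g => ?_) (fun g hg => ?_)
    · obtain ⟨h, hh⟩ := hpre _ hfl g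
      exact ⟨h, hh⟩
    · have hpg : ∀ y, p (g y) = 0 := fun y => congr($hg y)
      have h1 := not_cover q p hflat hK hcov g hpg
      obtain ⟨n, f, rfl⟩ := exists_gen q
      obtain ⟨g', hg'⟩ := hom_mem (ev (R := R) F) ρ hρ f hfl g (fun y => by
        obtain ⟨s, hs, a, ha⟩ := loc_surj (Ideal.span (Set.range f)) y
        refine torsionfree hflat _ hq s hs _ ?_
        rw [← map_smul, ha, map_smul]
        exact Submodule.smul_mem _ _ h1)
      rw [hg']
      refine Submodule.sum_mem _ fun i _ => ?_
      have h3 : f i • g' i = (algebraMap R (Localization.AtPrime (Ideal.span (Set.range f))) (f i)) • g' i := by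
        ext y
        rw [smul_dom, LinearMap.smul_apply, ← map_smul, algebraMap_smul]
      rw [h3]
      refine Submodule.smul_mem_smul ?_ trivial
      exact (IsLocalization.AtPrime.to_map_mem_maximal_iff
        (Localization.AtPrime (Ideal.span (Set.range f))) (Ideal.span (Set.range f)) _).2 (Ideal.subset_span ⟨i, rfl⟩)
  · rintro ⟨hK, hbij⟩
    have hF : EP R F := (isCotorsion_iff F).1 hcot
    have hK : EP R (LinearMap.ker p) := (isCotorsion_iff _).1 hK
    obtain ⟨ρ, hρ⟩ := exists_retract hflat hF
    refine ⟨⟨hflat, fun G _ _ hG γ => ?_⟩, fun h hh => ?_⟩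
    · obtain ⟨δ, hδ⟩ := hK.lift hG (LinearMap.ker p).subtype Subtype.val_injective p hsurj
        (fun x => by simp) γ
      exact ⟨δ, LinearMap.ext hδ⟩
    · have hph : ∀ x, p (h x) = p x := fun x => congr($hh x)
      have core := bij_core (ev (R := R) F) ρ hρ hflat (LinearMap.id - h) h
        (fun x => by simp) (fun q hq g => by
          have h1 := residue_inj _ (hbij q hq).1 ((LinearMap.id - h) ∘ₗ g) (by
            ext y
            change p (((LinearMap.id - h) ∘ₗ g) y) = 0
            simp [hph])
          change ((LinearMap.id - h) ∘ₗ g) 1 ∈ _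
          refine Submodule.smul_induction_on (p := fun g' => g' 1 ∈ q • (⊤ : Submodule R F)) h1 ?_ ?_
          · intro m hm g' _
            obtain ⟨s, hs, a, ha⟩ := loc_surj q m
            rw [smul_dom, smul_eq_mul, mul_one]
            refine torsionfree hflat q hq s hs _ ?_
            rw [← map_smul, ha, map_smul]
            refine Submodule.smul_mem_smul ?_ trivial
            rw [← IsLocalization.AtPrime.to_map_mem_maximal_iff (Localization.AtPrime q) q]
            rw [Algebra.algebraMap_eq_smul_one, ← ha, Algebra.smul_def]
            exact Ideal.mul_mem_left _ _ hm
          · intro a b ha hb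
            exact add_mem ha hb) ⊥
      constructor
      · rw [injective_iff_map_eq_zero]
        intro x hx
        simpa using core.1 x (by simp [hx])
      · intro y
        obtain ⟨x, hx⟩ := core.2 y
        refine ⟨x, ?_⟩
        rw [Submodule.bot_smul, Submodule.mem_bot, sub_eq_zero] at hx
        exact hx.symm
end

section
/- Let R be a commutative Noetherian ring, p ∈ Spec R, E an injective R-module, and M an R-module. Then there exists an isomorphism, natural in M: k(p) ⊗_{R_p} Hom_R(R_p, Hom_R(M,E)) ≅ Hom_R(Hom_{R_p}(k(p), M_p), E). -/
universe u

variable (R : Type u) [CommRing R]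

open CategoryTheory TensorProduct

section Helpers

variable {R}
variable {A : Type u} [CommRing A] [Algebra R A]
  {K : Type u} [CommRing K] [Algebra A K] [Algebra R K] [IsScalarTower R A K]
  {X : Type u} [AddCommGroup X] [Module R X] [Module A X] [IsScalarTower R A X]
  {E : Type u} [AddCommGroup E] [Module R E]
  {W : Type u} [AddCommGroup W] [Module A W]

theorem domSMul_apply (a : A) (f : X →ₗ[R] E) (x : X) : (a • f) x = f (a • x) := rfl

/-- evaluation at `c`, as an `R`-linear map. -/
noncomputable def evAt (R : Type u) [CommRing R] {A : Type u} [CommRing A] [Algebra R A]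
    {K : Type u} [CommRing K] [Algebra A K]
    (X : Type u) [AddCommGroup X] [Module R X] [Module A X] [IsScalarTower R A X]
    (c : K) : (K →ₗ[A] X) →ₗ[R] X where
  toFun h := h c
  map_add' _ _ := rfl
  map_smul' _ _ := rfl

noncomputable def tauAdd (θ : W ≃ₗ[A] (X →ₗ[R] E)) :
    K ⊗[A] W →+ ((K →ₗ[A] X) →ₗ[R] E) :=
  TensorProduct.liftAddHom
    { toFun := fun c =>
        { toFun := fun w => (θ w) ∘ₗ evAt R X c
          map_zero' := by ext h; simp
          map_add' := fun w w' => by ext h; simp }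
      map_zero' := by ext w h; simp [evAt]
      map_add' := fun c c' => by ext w h; simp [evAt] }
    (fun a c w => by
      ext h
      simp [evAt, domSMul_apply])

theorem tauAdd_tmul (θ : W ≃ₗ[A] (X →ₗ[R] E)) (c : K) (w : W) (h : K →ₗ[A] X) :
    tauAdd θ (c ⊗ₜ[A] w) h = θ w (h c) := rfl

noncomputable def tau (θ : W ≃ₗ[A] (X →ₗ[R] E)) :
    K ⊗[A] W →ₗ[R] ((K →ₗ[A] X) →ₗ[R] E) :=
  { tauAdd θ with
    map_smul' := fun r x => by
      induction x with
      | zero => simp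
      | add x y hx hy =>
        change tauAdd θ (r • x) = r • tauAdd θ x at hx
        change tauAdd θ (r • y) = r • tauAdd θ y at hy
        change tauAdd θ (r • (x + y)) = r • tauAdd θ (x + y)
        rw [smul_add, map_add, map_add, smul_add, hx, hy]
      | tmul c w =>
        ext h
        rw [TensorProduct.smul_tmul']
        change θ w (h (r • c)) = r • θ w (h c)
        rw [← IsScalarTower.algebraMap_smul A r c, map_smul, IsScalarTower.algebraMap_smul,
          map_smul] }

theorem tau_tmul (θ : W ≃ₗ[A] (X →ₗ[R] E)) (c : K) (w : W) (h : K →ₗ[A] X) :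
    tau θ (c ⊗ₜ[A] w) h = θ w (h c) := rfl

theorem exists_one_tmul (hK : Function.Surjective (algebraMap A K)) (x : K ⊗[A] W) :
    ∃ w : W, x = 1 ⊗ₜ[A] w := by
  induction x with
  | zero => exact ⟨0, by simp⟩
  | add x y hx hy =>
    obtain ⟨w, rfl⟩ := hx
    obtain ⟨w', rfl⟩ := hy
    exact ⟨w + w', by rw [TensorProduct.tmul_add]⟩
  | tmul c w =>
    obtain ⟨a, rfl⟩ := hK c
    exact ⟨a • w, by rw [← TensorProduct.smul_tmul, Algebra.algebraMap_eq_smul_one]⟩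

theorem mem_of_vanish (hE : Module.Injective R E) {n : ℕ} (a : Fin n → A) (g : X →ₗ[R] E)
    (hg : ∀ x, (∀ i, a i • x = 0) → g x = 0) :
    ∃ G : Fin n → (X →ₗ[R] E), g = ∑ i, a i • G i := by
  let L : X →ₗ[R] (Fin n → X) :=
    LinearMap.pi fun i => (a i • (LinearMap.id : X →ₗ[R] X))
  have hker : LinearMap.ker L ≤ LinearMap.ker g := by
    intro x hx
    refine hg x fun i => ?_
    exact congrFun hx i
  let q : (X ⧸ LinearMap.ker L) →ₗ[R] E := (LinearMap.ker L).liftQ g hker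
  let j : (X ⧸ LinearMap.ker L) →ₗ[R] (Fin n → X) := (LinearMap.ker L).liftQ L le_rfl
  have hj : Function.Injective j := by
    rw [← LinearMap.ker_eq_bot]
    exact Submodule.ker_liftQ_eq_bot _ _ _ le_rfl
  obtain ⟨H, hH⟩ := hE.out j hj q
  refine ⟨fun i => H ∘ₗ LinearMap.single R (fun _ => X) i, ?_⟩
  ext x
  have h1 : H (L x) = g x := hH (Submodule.Quotient.mk x)
  rw [← h1, LinearMap.sum_apply]
  have h2 : L x = ∑ i, Pi.single i (a i • x) := by
    rw [Finset.univ_sum_single]; rfl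
  rw [h2, map_sum]
  rfl

theorem tau_bijective [IsNoetherianRing A] (hE : Module.Injective R E)
    (hK : Function.Surjective (algebraMap A K)) (θ : W ≃ₗ[A] (X →ₗ[R] E)) :
    Function.Bijective (tau (K := K) θ) := by
  constructor
  · rw [injective_iff_map_eq_zero]
    intro x hx
    obtain ⟨w, rfl⟩ := exists_one_tmul hK x
    obtain ⟨n, a, ha⟩ := Submodule.fg_iff_exists_fin_generating_family.mp
      (IsNoetherian.noetherian (RingHom.ker (algebraMap A K)))
    have haK : ∀ i, algebraMap A K (a i) = 0 := fun i => by
      have : a i ∈ RingHom.ker (algebraMap A K) := by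
        rw [← ha]; exact Submodule.subset_span ⟨i, rfl⟩
      exact this
    obtain ⟨G, hG⟩ := mem_of_vanish hE a (θ w) (by
      intro x hx0
      have hann : ∀ b ∈ RingHom.ker (algebraMap A K), b • x = 0 := by
        intro b hb
        have : RingHom.ker (algebraMap A K) ≤ LinearMap.ker (LinearMap.toSpanSingleton A X x) := by
          rw [← ha, Submodule.span_le]
          rintro _ ⟨i, rfl⟩
          exact hx0 i
        exact this hb
      let e := LinearMap.quotKerEquivOfSurjective (Algebra.linearMap A K) hK
      let h : K →ₗ[A] X :=
        ((LinearMap.ker (Algebra.linearMap A K)).liftQ (LinearMap.toSpanSingleton A X x)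
          (fun b hb => hann b hb)) ∘ₗ e.symm.toLinearMap
      have h1 : h 1 = x := by
        have : e.symm 1 = Submodule.Quotient.mk 1 := by
          rw [LinearEquiv.symm_apply_eq]
          exact (map_one (algebraMap A K)).symm
        simp only [h, LinearMap.comp_apply, LinearEquiv.coe_coe, this]
        exact one_smul A x
      have := LinearMap.congr_fun hx h
      rw [tau_tmul, h1] at this
      exact this)
    have hw : w = ∑ i, a i • θ.symm (G i) := by
      apply θ.injective
      rw [hG, map_sum]
      simp
    rw [hw, TensorProduct.tmul_sum]
    refine Finset.sum_eq_zero fun i _ => ?_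
    rw [← TensorProduct.smul_tmul, ← Algebra.algebraMap_eq_smul_one, haK, TensorProduct.zero_tmul]
  · intro ψ
    have hinj : Function.Injective (evAt R X (1 : K) : (K →ₗ[A] X) →ₗ[R] X) := by
      intro h h' hh
      ext c
      obtain ⟨b, rfl⟩ := hK c
      rw [Algebra.algebraMap_eq_smul_one, map_smul, map_smul]
      exact congrArg _ hh
    obtain ⟨g, hg⟩ := hE.out _ hinj ψ
    refine ⟨1 ⊗ₜ θ.symm g, ?_⟩
    ext h
    rw [tau_tmul, LinearEquiv.apply_symm_apply]
    exact hg h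

/-- `Hom_R(S⁻¹R, Hom_R(M, E)) ≃ Hom_R(S⁻¹M, E)`. -/
noncomputable def thetaEquiv (S : Submonoid R) (M : Type u) [AddCommGroup M] [Module R M]
    (E : Type u) [AddCommGroup E] [Module R E] :
    (Localization S →ₗ[R] (M →ₗ[R] E)) ≃ₗ[Localization S] (LocalizedModule S M →ₗ[R] E) where
  toFun w := TensorProduct.lift w ∘ₗ
    ((LocalizedModule.equivTensorProduct S M).restrictScalars R).toLinearMap
  invFun g := TensorProduct.curry (g ∘ₗ
    ((LocalizedModule.equivTensorProduct S M).symm.restrictScalars R).toLinearMap)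
  map_add' w w' := by
    rw [← LinearMap.add_comp]
    congr 1
    exact TensorProduct.ext' fun a m => by simp
  map_smul' a w := by
    ext x
    simp only [RingHom.id_apply, domSMul_apply, LinearMap.comp_apply, LinearEquiv.coe_coe,
      LinearEquiv.restrictScalars_apply, map_smul]
    generalize LocalizedModule.equivTensorProduct S M x = t
    induction t with
    | zero => simp
    | add x y hx hy => simp only [smul_add, map_add, hx, hy]
    | tmul b m =>
      rw [TensorProduct.smul_tmul']
      rfl
  left_inv w := by ext a m; simp
  right_inv g := by
    ext x
    simp only [LinearMap.comp_apply, LinearEquiv.coe_coe, LinearEquiv.restrictScalars_apply]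
    have hl : ∀ G : Localization S ⊗[R] M →ₗ[R] E,
        TensorProduct.lift (TensorProduct.curry G) = G := fun G =>
      TensorProduct.ext' fun a m => by simp
    rw [hl]
    simp

theorem thetaEquiv_natural (S : Submonoid R) {M N : Type u} [AddCommGroup M] [Module R M]
    [AddCommGroup N] [Module R N]
    (E : Type u) [AddCommGroup E] [Module R E] (f : M →ₗ[R] N)
    (w : Localization S →ₗ[R] (N →ₗ[R] E)) (x : LocalizedModule S M) :
    thetaEquiv S M E (LinearMap.domHomPostcomp R (Localization S) (LinearMap.lcomp R E f) w) x
      = thetaEquiv S N E w (LocalizedModule.map S f x) := by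
  induction x using LocalizedModule.induction_on with
  | h m s =>
    rw [LocalizedModule.map_mk]
    simp [thetaEquiv, LinearMap.domHomPostcomp]

end Helpers

/-- For a prime `𝔭` of a commutative Noetherian ring `R`, an injective
module `E` and a module `M`, there is an isomorphism, natural in `M`:
`k(𝔭) ⊗_{R_𝔭} Hom_R(R_𝔭, Hom_R(M, E)) ≅ Hom_R(Hom_{R_𝔭}(k(𝔭), M_𝔭), E)`. -/
theorem tensor_hom_dual_natural_iso [IsNoetherianRing R]
    (𝔭 : Ideal R) [𝔭.IsPrime] (E : Type u) [AddCommGroup E] [Module R E]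
    (hE : Module.Injective R E) :
    ∃ e : ∀ (M : Type u) [AddCommGroup M] [Module R M],
        (IsLocalRing.ResidueField (Localization.AtPrime 𝔭) ⊗[Localization.AtPrime 𝔭]
            (Localization.AtPrime 𝔭 →ₗ[R] (M →ₗ[R] E))) ≃ₗ[R]
          ((IsLocalRing.ResidueField (Localization.AtPrime 𝔭) →ₗ[Localization.AtPrime 𝔭]
            LocalizedModule 𝔭.primeCompl M) →ₗ[R] E),
      ∀ (M N : Type u) [AddCommGroup M] [Module R M] [AddCommGroup N] [Module R N]
        (f : M →ₗ[R] N)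
        (x : IsLocalRing.ResidueField (Localization.AtPrime 𝔭) ⊗[Localization.AtPrime 𝔭]
          (Localization.AtPrime 𝔭 →ₗ[R] (N →ₗ[R] E))),
        e M (LinearMap.lTensor (IsLocalRing.ResidueField (Localization.AtPrime 𝔭))
              (LinearMap.domHomPostcomp R (Localization.AtPrime 𝔭) (LinearMap.lcomp R E f)) x)
          = LinearMap.lcomp R E
              ((LinearMap.llcomp (Localization.AtPrime 𝔭)
                  (IsLocalRing.ResidueField (Localization.AtPrime 𝔭))
                  (LocalizedModule 𝔭.primeCompl M) (LocalizedModule 𝔭.primeCompl N)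
                  (LocalizedModule.map 𝔭.primeCompl f)).restrictScalars R)
              (e N x) := by
  have hK : Function.Surjective (algebraMap (Localization.AtPrime 𝔭)
      (IsLocalRing.ResidueField (Localization.AtPrime 𝔭))) :=
    IsLocalRing.residue_surjective
  have : IsNoetherianRing (Localization.AtPrime 𝔭) :=
    IsLocalization.isNoetherianRing 𝔭.primeCompl _ inferInstance
  refine ⟨fun M _ _ => LinearEquiv.ofBijective (tau (thetaEquiv 𝔭.primeCompl M E))
    (tau_bijective hE hK _), ?_⟩
  intro M N _ _ _ _ f x
  obtain ⟨w, rfl⟩ := exists_one_tmul hK x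
  ext h
  exact thetaEquiv_natural 𝔭.primeCompl E f w (h 1)
end

section
/- Let R be a commutative Noetherian ring, M an R-module, and 0 → M → I^• a chain complex of R-modules. Then the following are equivalent: (1) 0 → M → I^• is a minimal injective resolution; (2) the dual complex Hom_R(I^•,E) → Hom_R(M,E) → 0 is a minimal flat resolution of Hom_R(M,E) for some injective cogenerator E; (3) Hom_R(I^•,E) → Hom_R(M,E) → 0 is a minimal flat resolution for every injective R-module E. -/
universe u

variable (R : Type u) [CommRing R]

/-- `0 → M → I⁰ → I¹ → ⋯` is a minimal injective resolution if it is an injective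
resolution in which each map from the image of a differential into the next term is an
injective envelope. -/
def IsMinimalInjectiveResolution (M : Type u) [AddCommGroup M] [Module R M]
    (I : ℕ → Type u) [∀ n, AddCommGroup (I n)] [∀ n, Module R (I n)]
    (ι : M →ₗ[R] I 0) (d : ∀ n, I n →ₗ[R] I (n + 1)) : Prop :=
  (∀ n, Module.Injective R (I n)) ∧ Function.Injective ι ∧
    LinearMap.range ι = LinearMap.ker (d 0) ∧
    (∀ n, LinearMap.range (d n) = LinearMap.ker (d (n + 1))) ∧
    IsInjectiveEnvelope R (LinearMap.range ι).subtype ∧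
    ∀ n, IsInjectiveEnvelope R (LinearMap.range (d n)).subtype

/-- `⋯ → F₁ → F₀ → M → 0` is a minimal flat resolution if it is a resolution such
that each induced map `Fᵢ → im dᵢ` is a flat cover. -/
def IsMinimalFlatResolution (M : Type u) [AddCommGroup M] [Module R M]
    (F : ℕ → Type u) [∀ n, AddCommGroup (F n)] [∀ n, Module R (F n)]
    (π : F 0 →ₗ[R] M) (d : ∀ n, F (n + 1) →ₗ[R] F n) : Prop :=
  Function.Surjective π ∧
    LinearMap.range (d 0) = LinearMap.ker π ∧
    (∀ n, LinearMap.range (d (n + 1)) = LinearMap.ker (d n)) ∧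
    IsFlatCover R π ∧
    ∀ n, IsFlatCover R (d n).rangeRestrict

namespace MFR

section ext
variable {R}
variable {A B E : Type u} [AddCommGroup A] [Module R A] [AddCommGroup B] [Module R B]
  [AddCommGroup E] [Module R E]

theorem ext_map (hE : Module.Injective R E) (f : A →ₗ[R] B) (v : A →ₗ[R] E)
    (h : ∀ x, f x = 0 → v x = 0) : ∃ w : B →ₗ[R] E, ∀ x, w (f x) = v x := by
  have hk : LinearMap.ker f ≤ LinearMap.ker v := fun x hx => h x hx
  obtain ⟨w, hw⟩ := hE.out ((LinearMap.ker f).liftQ f le_rfl)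
    (LinearMap.ker_eq_bot.mp (Submodule.ker_liftQ_eq_bot _ _ _ le_rfl))
    ((LinearMap.ker f).liftQ v hk)
  exact ⟨w, fun x => by simpa using hw ((LinearMap.ker f).mkQ x)⟩

/-- The submodule of elements annihilated by an ideal. -/
def tors (A : Type u) [AddCommGroup A] [Module R A] (a : Ideal R) : Submodule R A where
  carrier := {z | ∀ r ∈ a, r • z = 0}
  add_mem' := fun hx hy r hr => by rw [smul_add, hx r hr, hy r hr, add_zero]
  zero_mem' := fun r _ => smul_zero r
  smul_mem' := fun c x hx r hr => by rw [smul_comm, hx r hr, smul_zero]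

theorem mem_tors {a : Ideal R} {z : A} : z ∈ tors A a ↔ ∀ r ∈ a, r • z = 0 := Iff.rfl

theorem tors_anti {a b : Ideal R} (h : a ≤ b) : tors A b ≤ tors A a :=
  fun _ hz r hr => hz r (h hr)

theorem mem_tors_sup {a : Ideal R} {x : R} {z : A} :
    z ∈ tors A (a ⊔ Ideal.span {x}) ↔ z ∈ tors A a ∧ x • z = 0 := by
  constructor
  · intro h
    exact ⟨tors_anti le_sup_left h,
      h x (Ideal.mem_sup_right (Ideal.mem_span_singleton_self x))⟩
  · rintro ⟨h1, h2⟩ r hr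
    obtain ⟨s, hs, t, ht, rfl⟩ := Submodule.mem_sup.mp hr
    obtain ⟨c, rfl⟩ := Ideal.mem_span_singleton'.mp ht
    rw [add_smul, h1 s hs, mul_smul, h2, smul_zero, add_zero]

theorem g_kills [IsNoetherianRing R] (hE : Module.Injective R E)
    (g : (A →ₗ[R] E) →ₗ[R] (A →ₗ[R] E)) (a : Ideal R) (φ : A →ₗ[R] E)
    (h : ∀ z ∈ tors A a, φ z = 0) : ∀ z ∈ tors A a, g φ z = 0 := by
  obtain ⟨n, s, hs⟩ := Submodule.fg_iff_exists_fin_generating_family.mp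
    ((isNoetherianRing_iff_ideal_fg R).mp inferInstance a)
  let m : A →ₗ[R] (Fin n → A) := LinearMap.pi fun i => s i • LinearMap.id
  have hm : ∀ x, m x = 0 → φ x = 0 := by
    intro x hx
    apply h
    intro r hr
    rw [← hs] at hr
    have : Submodule.span R (Set.range s) ≤ LinearMap.ker (LinearMap.toSpanSingleton R A x) := by
      rw [Submodule.span_le]
      rintro _ ⟨i, rfl⟩
      simpa [m] using congrFun hx i
    simpa using this hr
  obtain ⟨w, hw⟩ := ext_map hE m φ hm
  have key : φ = ∑ i, s i • (w ∘ₗ LinearMap.single R (fun _ => A) i) := by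
    ext x
    rw [← hw x]
    conv_lhs => rw [← Finset.univ_sum_single (m x)]
    simp [m, Pi.single_smul]
  intro z hz
  rw [key]
  simp only [map_sum, map_smul, LinearMap.sum_apply, LinearMap.smul_apply]
  refine Finset.sum_eq_zero fun i _ => ?_
  rw [← map_smul, hz (s i) (hs ▸ Submodule.subset_span ⟨i, rfl⟩), map_zero]

theorem colon_lift (hA : Module.Injective R A) (a : Ideal R) (x : R) (z : A)
    (h : ∀ r, r * x ∈ a → r • z = 0) : ∃ w ∈ tors A a, x • w = z := by
  obtain ⟨w, hw⟩ := ext_map hA (LinearMap.toSpanSingleton R (R ⧸ a) (Ideal.Quotient.mk a x))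
    (LinearMap.toSpanSingleton R A z) (fun r hr => by
      simp only [LinearMap.toSpanSingleton_apply] at hr ⊢
      apply h
      rw [← Ideal.Quotient.eq_zero_iff_mem, map_mul, ← hr]
      rfl)
  refine ⟨w 1, fun r hr => ?_, ?_⟩
  · rw [← map_smul]
    have : r • (1 : R ⧸ a) = 0 := by
      rw [← Ideal.Quotient.eq_zero_iff_mem.mpr hr, Algebra.smul_def, mul_one]; rfl
    rw [this, map_zero]
  · have := hw 1
    simp only [LinearMap.toSpanSingleton_apply, one_smul] at this
    rw [← this, ← map_smul, Algebra.smul_def, mul_one]; rfl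

theorem div_map (hE : Module.Injective R E) (N : Submodule R A) (x : R) (φ : A →ₗ[R] E)
    (h : ∀ z ∈ N, x • z = 0 → φ z = 0) : ∃ ψ : A →ₗ[R] E, ∀ z ∈ N, φ z = ψ (x • z) := by
  obtain ⟨w, hw⟩ := ext_map hE (x • N.subtype) (φ ∘ₗ N.subtype) (fun z hz => h z z.2 hz)
  exact ⟨w, fun z hz => (hw ⟨z, hz⟩).symm⟩

end ext

section key
variable {R}
variable {I E : Type u} [AddCommGroup I] [Module R I] [AddCommGroup E] [Module R E]

/-- `f` is bijective on functionals restricted to `tors I a`. -/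
def P (f : (I →ₗ[R] E) →ₗ[R] (I →ₗ[R] E)) (a : Ideal R) : Prop :=
  (∀ y : I →ₗ[R] E, ∃ φ, ∀ z ∈ tors I a, f φ z = y z) ∧
  (∀ φ : I →ₗ[R] E, (∀ z ∈ tors I a, f φ z = 0) → ∀ z ∈ tors I a, φ z = 0)

theorem P_nonprime [IsNoetherianRing R] (hI : Module.Injective R I) (hE : Module.Injective R E)
    (f : (I →ₗ[R] E) →ₗ[R] (I →ₗ[R] E)) (a b c : Ideal R) (x : R)
    (hb : b = a ⊔ Ideal.span {x}) (hc : ∀ r, r ∈ c ↔ r * x ∈ a)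
    (Pb : P f b) (Pc : P f c) : P f a := by
  subst hb
  have hxc : ∀ z ∈ tors I a, x • z ∈ tors I c := fun z hz r hr => by
    rw [← mul_smul]; exact hz _ ((hc r).mp hr)
  have hcx : ∀ z ∈ tors I c, ∃ w ∈ tors I a, x • w = z := fun z hz =>
    colon_lift hI a x z fun r hr => hz r ((hc r).mpr hr)
  have fk : ∀ (φ ψ : I →ₗ[R] E), (∀ z ∈ tors I a, φ z = ψ (x • z)) →
      ∀ z ∈ tors I a, f φ z = f ψ (x • z) := by
    intro φ ψ h z hz
    have := g_kills hE f a (φ - x • ψ) (fun z hz => by simp [h z hz]) z hz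
    simpa [sub_eq_zero] using this
  constructor
  · intro y
    obtain ⟨φ, hφ⟩ := Pb.1 y
    obtain ⟨ψ, hψ⟩ := div_map hE (tors I a) x (f φ - y) (fun z hz hxz => by
      simp [hφ z (mem_tors_sup.mpr ⟨hz, hxz⟩)])
    obtain ⟨χ, hχ⟩ := Pc.1 ψ
    refine ⟨φ - x • χ, fun z hz => ?_⟩
    have h1 := hψ z hz
    have h2 := hχ _ (hxc z hz)
    rw [← h2, LinearMap.sub_apply] at h1
    simp only [map_sub, map_smul, LinearMap.sub_apply, LinearMap.smul_apply] at h1 ⊢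
    rw [← h1]; abel
  · intro φ hφ
    have h1 := Pb.2 φ (fun z hz => hφ z (tors_anti le_sup_left hz))
    obtain ⟨ψ, hψ⟩ := div_map hE (tors I a) x φ (fun z hz hxz =>
      h1 z (mem_tors_sup.mpr ⟨hz, hxz⟩))
    have h2 := Pc.2 ψ (fun z hz => by
      obtain ⟨w, hw, rfl⟩ := hcx z hz
      rw [← fk φ ψ hψ w hw, hφ w hw])
    intro z hz
    rw [hψ z hz, h2 _ (hxc z hz)]

theorem P_prime [IsNoetherianRing R] (hE : Module.Injective R E)
    (f : (I →ₗ[R] E) →ₗ[R] (I →ₗ[R] E)) (p : Ideal R) (hp : p.IsPrime) (N : Submodule R I)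
    (hN : ∀ x : I, x ≠ 0 → ∃ r : R, r • x ∈ N ∧ r • x ≠ 0)
    (hf : ∀ φ, ∀ z ∈ N, f φ z = φ z)
    (ih : ∀ b, p < b → P f b) : P f p := by
  have ih' : ∀ s, s ∉ p → P f (p ⊔ Ideal.span {s}) := fun s hs => ih _ (by
    refine lt_of_le_of_ne le_sup_left fun h => hs ?_
    rw [h]; exact Ideal.mem_sup_right (Ideal.mem_span_singleton_self s))
  -- the main claim
  have claim : ∀ φ : I →ₗ[R] E, (∀ s, s ∉ p → ∀ z ∈ tors I p, s • z = 0 → φ z = 0) →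
      ∀ z ∈ tors I p, f φ z = φ z := by
    intro φ hφ z hz
    by_cases hs : ∃ s, s ∉ p ∧ s • z = 0
    · obtain ⟨s, hs, hsz⟩ := hs
      have := g_kills hE f (p ⊔ Ideal.span {s}) φ (fun w hw =>
        hφ s hs w (mem_tors_sup.mp hw).1 (mem_tors_sup.mp hw).2) z (mem_tors_sup.mpr ⟨hz, hsz⟩)
      rw [this, hφ s hs z hz hsz]
    · push Not at hs
      have hz0 : z ≠ 0 := by
        have := hs 1 (fun h => hp.ne_top ((Ideal.eq_top_iff_one _).mpr h))
        rwa [one_smul] at this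
      obtain ⟨r, hr, hr0⟩ := hN z hz0
      have hrp : r ∉ p := fun h => hr0 (hz r h)
      obtain ⟨ψ, hψ⟩ := div_map hE (tors I p) r φ (hφ r hrp)
      have h1 := g_kills hE f p (φ - r • ψ) (fun z hz => by simp [hψ z hz]) z hz
      have h2 : f φ z = f ψ (r • z) := by simpa [sub_eq_zero] using h1
      rw [h2, hf ψ _ hr, hψ z hz]
  constructor
  · intro y
    choose! φ hφ using fun s (hs : s ∉ p) => (ih' s hs).1 y
    have agree : ∀ s t, s ∉ p → t ∉ p → ∀ z ∈ tors I p, s • z = 0 → φ (s * t) z = φ s z := by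
      intro s t hs ht z hz hsz
      have hst : s * t ∉ p := fun h => (hp.mem_or_mem h).elim hs ht
      have := (ih' s hs).2 (φ (s * t) - φ s) (fun w hw => by
        have hw' := mem_tors_sup.mp hw
        rw [map_sub, LinearMap.sub_apply, hφ s hs w hw, hφ (s * t) hst w
          (mem_tors_sup.mpr ⟨hw'.1, by rw [mul_comm, mul_smul, hw'.2, smul_zero]⟩), sub_self]) z
          (mem_tors_sup.mpr ⟨hz, hsz⟩)
      simpa [sub_eq_zero] using this
    have wd : ∀ s t, s ∉ p → t ∉ p → ∀ z ∈ tors I p, s • z = 0 → t • z = 0 →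
        φ s z = φ t z := by
      intro s t hs ht z hz hsz htz
      rw [← agree s t hs ht z hz hsz, mul_comm, agree t s ht hs z hz htz]
    let J : Submodule R I :=
      { carrier := {z | z ∈ tors I p ∧ ∃ s, s ∉ p ∧ s • z = 0}
        add_mem' := by
          rintro x y ⟨hx, s, hs, hsx⟩ ⟨hy, t, ht, hty⟩
          refine ⟨add_mem hx hy, s * t, fun h => (hp.mem_or_mem h).elim hs ht, ?_⟩
          rw [smul_add, mul_smul s t y, hty, mul_comm, mul_smul, hsx]; simp
        zero_mem' := ⟨zero_mem _, 1, fun h => hp.ne_top ((Ideal.eq_top_iff_one _).mpr h), by simp⟩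
        smul_mem' := by
          rintro c x ⟨hx, s, hs, hsx⟩
          exact ⟨Submodule.smul_mem _ _ hx, s, hs, by rw [smul_comm, hsx, smul_zero]⟩ }
    have hJ : ∀ z : J, ∃ s, s ∉ p ∧ s • (z : I) = 0 := fun z => z.2.2
    choose σ hσ1 hσ2 using hJ
    have hσ : ∀ (z : J) (s : R), s ∉ p → s • (z : I) = 0 → φ (σ z) z = φ s z := fun z s hs hsz =>
      wd _ _ (hσ1 z) hs z z.2.1 (hσ2 z) hsz
    let v : J →ₗ[R] E :=
      { toFun := fun z => φ (σ z) z
        map_add' := by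
          intro x y
          have hst : σ x * σ y ∉ p := fun h => (hp.mem_or_mem h).elim (hσ1 x) (hσ1 y)
          have h1 : (σ x * σ y) • (x : I) = 0 := by rw [mul_comm, mul_smul, hσ2 x, smul_zero]
          have h2 : (σ x * σ y) • (y : I) = 0 := by rw [mul_smul, hσ2 y, smul_zero]
          rw [hσ x _ hst h1, hσ y _ hst h2, hσ (x + y) _ hst (by
            rw [Submodule.coe_add, smul_add, h1, h2, add_zero]), Submodule.coe_add, map_add]
        map_smul' := by
          intro c x
          rw [hσ (c • x) (σ x) (hσ1 x) (by
            rw [Submodule.coe_smul, smul_comm, hσ2 x, smul_zero]), Submodule.coe_smul, map_smul]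
          rfl }
    obtain ⟨w, hw⟩ := ext_map hE J.subtype v (fun x hx => by
      have : x = 0 := Subtype.ext hx
      rw [this, map_zero])
    have hw' : ∀ s, s ∉ p → ∀ z ∈ tors I p, s • z = 0 → w z = φ s z := fun s hs z hz hsz =>
      (hw ⟨z, hz, s, hs, hsz⟩).trans (hσ ⟨z, hz, s, hs, hsz⟩ s hs hsz)
    have hδ := claim (y - f w) (fun s hs z hz hsz => by
      have h1 := g_kills hE f (p ⊔ Ideal.span {s}) (w - φ s) (fun u hu => by
        have hu' := mem_tors_sup.mp hu
        simp [hw' s hs u hu'.1 hu'.2]) z (mem_tors_sup.mpr ⟨hz, hsz⟩)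
      have h2 := hφ s hs z (mem_tors_sup.mpr ⟨hz, hsz⟩)
      rw [map_sub, LinearMap.sub_apply, sub_eq_zero] at h1
      rw [LinearMap.sub_apply, h1, h2, sub_self])
    refine ⟨w + (y - f w), fun z hz => ?_⟩
    rw [map_add, LinearMap.add_apply, hδ z hz, LinearMap.sub_apply]
    abel
  · intro φ hφ z hz
    rw [← claim φ (fun s hs z hz hsz => (ih' s hs).2 φ (fun w hw =>
      hφ w (tors_anti le_sup_left hw)) z (mem_tors_sup.mpr ⟨hz, hsz⟩)) z hz, hφ z hz]

theorem P_all [IsNoetherianRing R] (hI : Module.Injective R I) (hE : Module.Injective R E)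
    (f : (I →ₗ[R] E) →ₗ[R] (I →ₗ[R] E)) (N : Submodule R I)
    (hN : ∀ x : I, x ≠ 0 → ∃ r : R, r • x ∈ N ∧ r • x ≠ 0)
    (hf : ∀ φ, ∀ z ∈ N, f φ z = φ z) (a : Ideal R) : P f a := by
  induction a using IsNoetherian.induction with
  | hgt a ih =>
    by_cases ha : a = ⊤
    · have h0 : ∀ z ∈ tors I a, z = 0 := fun z hz => by
        simpa using hz 1 (by rw [ha]; trivial)
      exact ⟨fun y => ⟨0, fun z hz => by rw [h0 z hz, map_zero, map_zero]⟩,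
        fun φ _ z hz => by rw [h0 z hz, map_zero]⟩
    by_cases hp : Ideal.IsPrime a
    · exact P_prime hE f a hp N hN hf ih
    · obtain ⟨x, y, hxy, hx, hy⟩ : ∃ x y, x * y ∈ a ∧ x ∉ a ∧ y ∉ a := by
        by_contra! h
        exact hp ⟨ha, fun {x y} hxy => by
          by_contra! h'
          exact h'.2 (h x y hxy h'.1)⟩
      let c : Ideal R := Submodule.comap (LinearMap.toSpanSingleton R R x) a
      have hc : ∀ r, r ∈ c ↔ r * x ∈ a := fun r => Iff.rfl
      refine P_nonprime hI hE f a _ c x rfl hc (ih _ ?_) (ih _ ?_)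
      · refine lt_of_le_of_ne le_sup_left fun h => hx ?_
        rw [h]; exact Ideal.mem_sup_right (Ideal.mem_span_singleton_self x)
      · refine lt_of_le_of_ne (fun r hr => (hc r).mpr (Ideal.mul_mem_right x a hr)) fun h => hy ?_
        rw [h, hc, mul_comm]; exact hxy

theorem key [IsNoetherianRing R] (hI : Module.Injective R I) (hE : Module.Injective R E)
    (f : (I →ₗ[R] E) →ₗ[R] (I →ₗ[R] E)) (N : Submodule R I)
    (hN : ∀ K : Submodule R I, K ≠ ⊥ → K ⊓ N ≠ ⊥)
    (hf : ∀ φ, ∀ z ∈ N, f φ z = φ z) : Function.Bijective f := by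
  have hP := P_all hI hE f N (fun x hx => by
    have := hN (Submodule.span R {x}) (by simpa using hx)
    obtain ⟨y, hy, hy0⟩ := Submodule.exists_mem_ne_zero_of_ne_bot this
    obtain ⟨r, rfl⟩ := Submodule.mem_span_singleton.mp hy.1
    exact ⟨r, hy.2, hy0⟩) hf ⊥
  have ht : ∀ z : I, z ∈ tors I (⊥ : Ideal R) := fun z r hr => by
    rw [(Submodule.mem_bot R).mp hr, zero_smul]
  constructor
  · rw [injective_iff_map_eq_zero]
    intro φ hφ
    ext z
    exact hP.2 φ (fun z _ => by rw [hφ]; rfl) z (ht z)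
  · intro y
    obtain ⟨φ, hφ⟩ := hP.1 y
    exact ⟨φ, LinearMap.ext fun z => hφ z (ht z)⟩

end key

section flat
variable {R}
variable {A B E : Type u} [AddCommGroup A] [Module R A] [AddCommGroup B] [Module R B]
  [AddCommGroup E] [Module R E]

theorem precover_lift (hE : Module.Injective R E) (f : A →ₗ[R] B)
    (F : Type u) [AddCommGroup F] [Module R F] (hF : Module.Flat R F)
    (g : F →ₗ[R] (A →ₗ[R] E)) (hg : ∀ x a, f a = 0 → g x a = 0) :
    ∃ h : F →ₗ[R] (B →ₗ[R] E), ∀ x a, h x (f a) = g x a := by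
  have hex : Function.Exact (LinearMap.ker f).subtype f :=
    LinearMap.exact_subtype_ker_map f
  have hex' := Module.Flat.lTensor_exact F hex
  obtain ⟨w, hw⟩ := ext_map hE (f.lTensor F) (TensorProduct.lift g) (fun t ht => by
    obtain ⟨s, rfl⟩ := (hex' t).mp ht
    rw [← LinearMap.comp_apply]
    have : TensorProduct.lift g ∘ₗ (LinearMap.ker f).subtype.lTensor F = 0 := by
      ext x a
      simpa using hg x a a.2
    rw [this, LinearMap.zero_apply])
  refine ⟨TensorProduct.curry w, fun x a => ?_⟩
  simpa using hw (TensorProduct.tmul R x a)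

theorem flat_dual [IsNoetherianRing R] (hA : Module.Injective R A) (hE : Module.Injective R E) :
    Module.Flat R (A →ₗ[R] E) := by
  apply Module.Flat.of_forall_isTrivialRelation
  intro l f φ h
  -- kernel of `f` on `R^l`
  let F : (Fin l → R) →ₗ[R] R := Fintype.linearCombination R f
  obtain ⟨k, s, hs⟩ := Submodule.fg_iff_exists_fin_generating_family.mp
    (IsNoetherian.noetherian (LinearMap.ker F))
  have hsF : ∀ j, F (s j) = 0 := fun j => by
    have : s j ∈ LinearMap.ker F := hs ▸ Submodule.subset_span ⟨j, rfl⟩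
    exact this
  let m : (Fin l → A) →ₗ[R] (Fin k → A) :=
    LinearMap.pi fun j => ∑ i, s j i • LinearMap.proj i
  let Φ : (Fin l → A) →ₗ[R] E := ∑ i, φ i ∘ₗ LinearMap.proj i
  obtain ⟨w, hw⟩ := ext_map hE m Φ (fun x hx => by
    let X : (Fin l → R) →ₗ[R] A := Fintype.linearCombination R x
    have hX : LinearMap.ker F ≤ LinearMap.ker X := by
      rw [← hs, Submodule.span_le]
      rintro _ ⟨j, rfl⟩
      simpa [m, X, Fintype.linearCombination_apply] using congrFun hx j
    obtain ⟨y, hy⟩ := ext_map hA F X (fun r hr => hX hr)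
    have hxy : ∀ i, x i = f i • y 1 := fun i => by
      have := hy (Pi.single i 1)
      simp only [F, X, Fintype.linearCombination_apply_single, one_smul] at this
      rw [← this, ← map_smul, smul_eq_mul, mul_one]
    have := LinearMap.congr_fun h (y 1)
    simpa [Φ, hxy] using this)
  refine ⟨k, fun i j => s j i, fun j => w ∘ₗ LinearMap.single R (fun _ => A) j, fun i => ?_,
    fun j => ?_⟩
  · ext x
    have h1 : Φ (Pi.single i x) = φ i x := by
      simp only [Φ, LinearMap.sum_apply, LinearMap.comp_apply, LinearMap.proj_apply]
      rw [Finset.sum_eq_single i]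
      · simp
      · intro b _ hb
        simp [Pi.single_eq_of_ne hb]
      · simp
    rw [← h1, ← hw, ← Finset.univ_sum_single (m (Pi.single i x)), map_sum, LinearMap.sum_apply]
    refine Finset.sum_congr rfl fun j _ => ?_
    have h2 : m (Pi.single i x) j = s j i • x := by
      simp only [m, LinearMap.pi_apply, LinearMap.sum_apply, LinearMap.smul_apply,
        LinearMap.proj_apply]
      rw [Finset.sum_eq_single i]
      · simp
      · intro b _ hb
        simp [Pi.single_eq_of_ne hb]
      · simp
    rw [h2]
    simp [Pi.single_smul]
  · have := hsF j
    simp only [F, Fintype.linearCombination_apply, smul_eq_mul] at this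
    rw [← this]
    exact Finset.sum_congr rfl fun i _ => mul_comm _ _

theorem separate (hE : IsInjectiveCogenerator R E) (N : Submodule R A) (x : A) (hx : x ∉ N) :
    ∃ φ : A →ₗ[R] E, (∀ z ∈ N, φ z = 0) ∧ φ x ≠ 0 := by
  let y : A ⧸ N := N.mkQ x
  have hy : y ≠ 0 := by simpa [y] using hx
  let Y := Submodule.span R {y}
  obtain ⟨g, hg⟩ := hE.2 Y ⟨⟨y, Submodule.mem_span_singleton_self y⟩, fun h => hy
    (congrArg Subtype.val h)⟩
  have hgy : g ⟨y, Submodule.mem_span_singleton_self y⟩ ≠ 0 := by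
    intro h
    apply hg
    ext ⟨z, hz⟩
    obtain ⟨r, rfl⟩ := Submodule.mem_span_singleton.mp hz
    have : (⟨r • y, hz⟩ : Y) = r • ⟨y, Submodule.mem_span_singleton_self y⟩ := rfl
    rw [this, map_smul, h, smul_zero]; rfl
  obtain ⟨w, hw⟩ := ext_map hE.1 Y.subtype g (fun z hz => by
    have : z = 0 := Subtype.ext hz
    rw [this, map_zero])
  refine ⟨w ∘ₗ N.mkQ, fun z hz => ?_, ?_⟩
  · have : N.mkQ z = 0 := by simpa using hz
    rw [LinearMap.comp_apply, this, map_zero]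
  · have := hw ⟨y, Submodule.mem_span_singleton_self y⟩
    rw [← this] at hgy
    exact hgy

theorem separate' (hE : IsInjectiveCogenerator R E) (x : A) (hx : ∀ φ : A →ₗ[R] E, φ x = 0) :
    x = 0 := by
  by_contra h
  obtain ⟨φ, -, h2⟩ := separate hE ⊥ x (by simpa using h)
  exact h2 (hx φ)

theorem injective_of_flat_dual [IsNoetherianRing R] (hE : IsInjectiveCogenerator R E)
    (hF : Module.Flat R (A →ₗ[R] E)) : Module.Injective R A := by
  apply Module.Baer.injective
  intro a g
  obtain ⟨n, s, hs⟩ := Submodule.fg_iff_exists_fin_generating_family.mp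
    ((isNoetherianRing_iff_ideal_fg R).mp inferInstance a)
  have hsa : ∀ i, s i ∈ a := fun i => hs ▸ Submodule.subset_span ⟨i, rfl⟩
  let m : A →ₗ[R] (Fin n → A) := LinearMap.pi fun i => s i • LinearMap.id
  let x : Fin n → A := fun i => g ⟨s i, hsa i⟩
  have hx : x ∈ LinearMap.range m := by
    by_contra hx
    obtain ⟨Φ, h1, h2⟩ := separate hE _ x hx
    have hrel : ∑ i, s i • (Φ ∘ₗ LinearMap.single R (fun _ => A) i) = 0 := by
      ext z
      rw [LinearMap.zero_apply, ← h1 (m z) ⟨z, rfl⟩]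
      conv_rhs => rw [← Finset.univ_sum_single (m z)]
      simp [m, Pi.single_smul]
    obtain ⟨k, c, ψ, hc1, hc2⟩ := Module.Flat.isTrivialRelation_of_sum_smul_eq_zero hrel
    apply h2
    rw [← Finset.univ_sum_single x, map_sum]
    have : ∀ i, Φ (Pi.single i (x i)) = ∑ j, ψ j (c i j • x i) := fun i => by
      have := LinearMap.congr_fun (hc1 i) (x i)
      simpa using this
    simp_rw [this]
    rw [Finset.sum_comm]
    refine Finset.sum_eq_zero fun j _ => ?_
    rw [← map_sum]
    have h0 : ∑ i, c i j • x i = 0 := by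
      simp only [x, ← map_smul, ← map_sum]
      have : ∑ i, c i j • (⟨s i, hsa i⟩ : a) = 0 := by
        apply Subtype.ext
        rw [Submodule.coe_sum]
        simpa [mul_comm] using hc2 j
      rw [this, map_zero]
    rw [h0, map_zero]
  obtain ⟨y, hy⟩ := hx
  refine ⟨LinearMap.toSpanSingleton R A y, fun r hr => ?_⟩
  have hle : ∀ r (h : r ∈ Submodule.span R (Set.range s)) (h' : r ∈ a),
      LinearMap.toSpanSingleton R A y r = g ⟨r, h'⟩ := by
    intro r h
    induction h using Submodule.span_induction with
    | mem r h =>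
      obtain ⟨i, rfl⟩ := h
      intro h'
      simpa [m, x] using congrFun hy i
    | zero =>
      intro h'
      rw [map_zero]; exact (map_zero g).symm
    | add r t hr ht h1 h2 =>
      intro h'
      rw [hs] at hr ht
      rw [map_add, h1 hr, h2 ht, ← map_add]; rfl
    | smul c r hr h1 =>
      intro h'
      rw [hs] at hr
      rw [map_smul, h1 hr, ← map_smul]; rfl
  exact hle r (hs ▸ hr) hr

variable (R) in
theorem exists_cogenerator : IsInjectiveCogenerator R (CharacterModule R) := by
  refine ⟨Module.Flat.iff_characterModule_injective.mp inferInstance, ?_⟩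
  rintro N _ _ ⟨x, hx⟩
  obtain ⟨c, hc⟩ := CharacterModule.exists_character_apply_ne_zero_of_ne_zero hx
  refine ⟨CharacterModule.homEquiv.symm (CharacterModule.dual
    (TensorProduct.rid R N).toLinearMap c), fun h => hc ?_⟩
  have := congrArg (fun (e : CharacterModule R) => e 1) (LinearMap.congr_fun h x)
  have h2 : c (TensorProduct.rid R N (TensorProduct.tmul R x (1 : R))) = 0 := this
  rwa [TensorProduct.rid_tmul, one_smul] at h2

theorem essential (hE : IsInjectiveCogenerator R E) (hA : Module.Injective R A)
    (M : Submodule R A)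
    (h : ∀ f : (A →ₗ[R] E) →ₗ[R] (A →ₗ[R] E), (∀ φ, ∀ z ∈ M, f φ z = φ z) →
      Function.Bijective f)
    (N : Submodule R A) (hN : N ≠ ⊥) : N ⊓ M ≠ ⊥ := by
  intro hNM
  apply hN
  rw [eq_bot_iff]
  intro n hn
  obtain ⟨e, he⟩ := ext_map hA (M.subtype.coprod N.subtype) (M.subtype.coprod 0) (by
    rintro ⟨a, b⟩ hab
    simp only [LinearMap.coprod_apply, Submodule.subtype_apply] at hab
    have ha : (a : A) = -b := eq_neg_of_add_eq_zero_left hab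
    have : (a : A) ∈ N ⊓ M := ⟨ha ▸ N.neg_mem b.2, a.2⟩
    rw [hNM, Submodule.mem_bot] at this
    simp [this])
  have heM : ∀ z ∈ M, e z = z := fun z hz => by simpa using he (⟨z, hz⟩, 0)
  have heN : e n = 0 := by simpa using he (0, ⟨n, hn⟩)
  have hb := h (LinearMap.lcomp R E e) (fun φ z hz => by
    rw [LinearMap.lcomp_apply, heM z hz])
  rw [Submodule.mem_bot]
  apply separate' hE
  intro φ
  obtain ⟨ψ, rfl⟩ := hb.2 φ
  rw [LinearMap.lcomp_apply, heN, map_zero]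

end flat

section main
variable {R}
variable {M : Type u} [AddCommGroup M] [Module R M]
    (I : ℕ → Type u) [∀ n, AddCommGroup (I n)] [∀ n, Module R (I n)]
    (ι : M →ₗ[R] I 0) (d : ∀ n, I n →ₗ[R] I (n + 1))
  {E : Type u} [AddCommGroup E] [Module R E]

theorem exact_dual {A B C : Type u} [AddCommGroup A] [Module R A] [AddCommGroup B] [Module R B]
    [AddCommGroup C] [Module R C] (hE : Module.Injective R E) (f : A →ₗ[R] B) (g : B →ₗ[R] C)
    (h : LinearMap.range f = LinearMap.ker g) :
    LinearMap.range (LinearMap.lcomp R E g) = LinearMap.ker (LinearMap.lcomp R E f) := by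
  ext φ
  constructor
  · rintro ⟨ψ, rfl⟩
    rw [LinearMap.mem_ker]
    ext x
    have : f x ∈ LinearMap.ker g := h ▸ ⟨x, rfl⟩
    simp [LinearMap.mem_ker.mp this]
  · intro hφ
    obtain ⟨ψ, hψ⟩ := ext_map hE g φ (fun x hx => by
      have : x ∈ LinearMap.range f := h ▸ hx
      obtain ⟨y, rfl⟩ := this
      exact LinearMap.congr_fun hφ y)
    exact ⟨ψ, LinearMap.ext hψ⟩

theorem exact_of_dual {A B C : Type u} [AddCommGroup A] [Module R A] [AddCommGroup B] [Module R B]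
    [AddCommGroup C] [Module R C] (hE : IsInjectiveCogenerator R E)
    (f : A →ₗ[R] B) (g : B →ₗ[R] C) (hgf : g ∘ₗ f = 0)
    (h : LinearMap.range (LinearMap.lcomp R E g) = LinearMap.ker (LinearMap.lcomp R E f)) :
    LinearMap.range f = LinearMap.ker g := by
  apply le_antisymm
  · rintro _ ⟨x, rfl⟩
    exact LinearMap.congr_fun hgf x
  · intro x hx
    by_contra hx'
    obtain ⟨φ, h1, h2⟩ := separate hE _ x hx'
    have : φ ∈ LinearMap.range (LinearMap.lcomp R E g) := by
      rw [h, LinearMap.mem_ker]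
      ext y
      exact h1 _ ⟨y, rfl⟩
    obtain ⟨ψ, rfl⟩ := this
    apply h2
    rw [LinearMap.lcomp_apply, LinearMap.mem_ker.mp hx, map_zero]

theorem forward [IsNoetherianRing R] (h : IsMinimalInjectiveResolution R M I ι d)
    (hE : Module.Injective R E) :
    IsMinimalFlatResolution R (M →ₗ[R] E) (fun n => I n →ₗ[R] E)
          (LinearMap.lcomp R E ι) (fun n => LinearMap.lcomp R E (d n)) := by
  obtain ⟨hI, hι, h0, hd, e0, en⟩ := h
  refine ⟨?_, exact_dual hE _ _ h0, fun n => exact_dual hE _ _ (hd n), ⟨⟨?_, ?_⟩, ?_⟩,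
    fun n => ⟨⟨?_, ?_⟩, ?_⟩⟩
  · intro φ
    obtain ⟨w, hw⟩ := ext_map hE ι φ (fun x hx => by
      rw [(injective_iff_map_eq_zero ι).mp hι x hx, map_zero])
    exact ⟨w, LinearMap.ext hw⟩
  · exact flat_dual (hI 0) hE
  · intro F _ _ hF g
    obtain ⟨k, hk⟩ := precover_lift hE ι F hF g (fun x a ha => by
      rw [(injective_iff_map_eq_zero ι).mp hι a ha, map_zero])
    exact ⟨k, LinearMap.ext fun x => LinearMap.ext fun a => hk x a⟩
  · intro f hf
    refine key (hI 0) hE f (LinearMap.range ι) (by simpa using e0.2.2) ?_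
    rintro φ _ ⟨x, rfl⟩
    exact LinearMap.congr_fun (LinearMap.congr_fun hf φ) x
  · exact flat_dual (hI (n + 1)) hE
  · intro F _ _ hF g
    obtain ⟨k, hk⟩ := precover_lift hE (d n) F hF (Submodule.subtype _ ∘ₗ g) (fun x a ha => by
      obtain ⟨ψ, hψ⟩ := (g x).2
      rw [LinearMap.comp_apply, Submodule.subtype_apply, ← hψ, LinearMap.lcomp_apply, ha, map_zero])
    exact ⟨k, LinearMap.ext fun x => Subtype.ext (LinearMap.ext fun a => hk x a)⟩
  · intro f hf
    refine key (hI (n + 1)) hE f (LinearMap.range (d n)) (by simpa using (en n).2.2) ?_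
    rintro φ _ ⟨x, rfl⟩
    exact LinearMap.congr_fun (congrArg Subtype.val (LinearMap.congr_fun hf φ)) x

theorem backward [IsNoetherianRing R] (hc₀ : d 0 ∘ₗ ι = 0) (hc : ∀ n, d (n + 1) ∘ₗ d n = 0)
    (hE : IsInjectiveCogenerator R E)
    (h : IsMinimalFlatResolution R (M →ₗ[R] E) (fun n => I n →ₗ[R] E)
          (LinearMap.lcomp R E ι) (fun n => LinearMap.lcomp R E (d n))) :
    IsMinimalInjectiveResolution R M I ι d := by
  obtain ⟨hs, h0, hd, c0, cn⟩ := h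
  have hI : ∀ n, Module.Injective R (I n) := by
    rintro (_ | n)
    · exact injective_of_flat_dual hE c0.1.1
    · exact injective_of_flat_dual hE (cn n).1.1
  refine ⟨hI, ?_, exact_of_dual hE _ _ hc₀ h0, fun n => exact_of_dual hE _ _ (hc n) (hd n),
    ⟨hI 0, Subtype.val_injective, ?_⟩, fun n => ⟨hI (n + 1), Subtype.val_injective, ?_⟩⟩
  · rw [injective_iff_map_eq_zero]
    intro x hx
    apply separate' hE
    intro φ
    obtain ⟨ψ, rfl⟩ := hs φ
    rw [LinearMap.lcomp_apply, hx, map_zero]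
  · rw [Submodule.range_subtype]
    refine essential hE (hI 0) _ fun f hf => c0.2 f ?_
    exact LinearMap.ext fun φ => LinearMap.ext fun x => hf φ _ ⟨x, rfl⟩
  · rw [Submodule.range_subtype]
    refine essential hE (hI (n + 1)) _ fun f hf => (cn n).2 f ?_
    exact LinearMap.ext fun φ => Subtype.ext (LinearMap.ext fun x => hf φ _ ⟨x, rfl⟩)

end main

end MFR

/-- Over a commutative Noetherian ring, a chain complex `0 → M → I^•`
is a minimal injective resolution iff its dual `Hom_R(I^•, E) → Hom_R(M, E) → 0` is a
minimal flat resolution for some injective cogenerator `E`, iff the dual is a minimal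
flat resolution for every injective module `E`. -/
theorem minimalInjectiveResolution_iff_dual_minimalFlatResolution [IsNoetherianRing R]
    {M : Type u} [AddCommGroup M] [Module R M]
    (I : ℕ → Type u) [∀ n, AddCommGroup (I n)] [∀ n, Module R (I n)]
    (ι : M →ₗ[R] I 0) (d : ∀ n, I n →ₗ[R] I (n + 1))
    (hc₀ : d 0 ∘ₗ ι = 0) (hc : ∀ n, d (n + 1) ∘ₗ d n = 0) :
    (IsMinimalInjectiveResolution R M I ι d ↔
      ∃ (E : Type u) (_ : AddCommGroup E) (_ : Module R E),
        IsInjectiveCogenerator R E ∧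
          IsMinimalFlatResolution R (M →ₗ[R] E) (fun n => I n →ₗ[R] E)
            (LinearMap.lcomp R E ι) (fun n => LinearMap.lcomp R E (d n))) ∧
    (IsMinimalInjectiveResolution R M I ι d ↔
      ∀ (E : Type u) [AddCommGroup E] [Module R E], Module.Injective R E →
        IsMinimalFlatResolution R (M →ₗ[R] E) (fun n => I n →ₗ[R] E)
          (LinearMap.lcomp R E ι) (fun n => LinearMap.lcomp R E (d n))) := by
  have hcog := MFR.exists_cogenerator R
  refine ⟨⟨fun h => ⟨CharacterModule R, inferInstance, inferInstance, hcog,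
      MFR.forward I ι d h hcog.1⟩, ?_⟩,
    ⟨fun h E _ _ hE => MFR.forward I ι d h hE,
      fun h => MFR.backward I ι d hc₀ hc hcog (h _ hcog.1)⟩⟩
  rintro ⟨E, _, _, hE, h⟩
  exact MFR.backward I ι d hc₀ hc hE h
end

section
/- Let S be a commutative ring. Then S is Noetherian if and only if for every morphism i of S-modules, i is an injective envelope precisely when i^+ := Hom_ℤ(i, ℚ/ℤ) is a flat cover. -/
universe u

variable (R : Type u) [CommRing R]

open CharacterModule

section
variable {R}
variable {A B E : Type u} [AddCommGroup A] [Module R A] [AddCommGroup B] [Module R B]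
  [AddCommGroup E] [Module R E]

theorem aux_fact (L : A →ₗ[R] B) (φ : CharacterModule A) (h : ∀ a, L a = 0 → φ a = 0) :
    ∃ ψ : CharacterModule B, ∀ a, φ a = ψ (L a) := by
  let L' : A →ₗ[ℤ] B := L.toAddMonoidHom.toIntLinearMap
  let φ' : A →ₗ[ℤ] AddCircle (1 : ℚ) := AddMonoidHom.toIntLinearMap φ
  let N := LinearMap.ker L'
  let f : (A ⧸ N) →ₗ[ℤ] B := N.liftQ L' le_rfl
  have hf : Function.Injective f := by
    rw [← LinearMap.ker_eq_bot]
    exact Submodule.ker_liftQ_eq_bot _ _ _ le_rfl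
  let φ2 : (A ⧸ N) →ₗ[ℤ] AddCircle (1 : ℚ) := N.liftQ φ' (fun a ha => h a ha)
  obtain ⟨ψ, hψ⟩ := dual_surjective_of_injective f hf (φ2.toAddMonoidHom)
  refine ⟨ψ, fun a => ?_⟩
  exact (congr($hψ (N.mkQ a))).symm

theorem aux_fact_pi {ι : Type} [Fintype ι] (L : A →ₗ[R] (ι → B)) (φ : CharacterModule A)
    (h : ∀ a, L a = 0 → φ a = 0) :
    ∃ ψ : ι → CharacterModule B, ∀ a, φ a = ∑ j, ψ j (L a j) := by
  classical
  obtain ⟨ψ, hψ⟩ := aux_fact L φ h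
  refine ⟨fun j => dual (LinearMap.single R (fun _ => B) j) ψ, fun a => ?_⟩
  rw [hψ]
  conv_lhs => rw [← Finset.univ_sum_single (L a)]
  rw [map_sum]
  rfl

theorem aux_sum_apply {ι : Type} (s : Finset ι) (φ : ι → CharacterModule A) (a : A) :
    (∑ i ∈ s, φ i) a = ∑ i ∈ s, φ i a :=
  AddMonoidHom.finsetSum_apply φ s a

theorem aux_add_apply (φ ψ : CharacterModule A) (a : A) : (φ + ψ) a = φ a + ψ a := rfl
theorem aux_sub_apply (φ ψ : CharacterModule A) (a : A) : (φ - ψ) a = φ a - ψ a := rfl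
theorem aux_zero_apply (a : A) : (0 : CharacterModule A) a = 0 := rfl

theorem aux_mem [IsNoetherianRing R] (I : Ideal R) (x : CharacterModule E) :
    x ∈ I • (⊤ : Submodule R (CharacterModule E)) ↔
      ∀ e : E, (∀ r ∈ I, r • e = 0) → x e = 0 := by
  constructor
  · intro hx e he
    refine Submodule.smul_induction_on hx ?_ ?_
    · intro r hr n _
      rw [CharacterModule.smul_apply, he r hr, map_zero]
    · intro a b ha hb
      rw [aux_add_apply, ha, hb, add_zero]
  · intro h
    obtain ⟨n, a, ha⟩ := Submodule.fg_iff_exists_fin_generating_family.1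
      ((isNoetherianRing_iff_ideal_fg R).1 inferInstance I)
    have hsp : ∀ j, a j ∈ I := fun j => ha ▸ Submodule.subset_span ⟨j, rfl⟩
    let L : E →ₗ[R] (Fin n → E) := LinearMap.pi (fun j => LinearMap.lsmul R E (a j))
    obtain ⟨ψ, hψ⟩ := aux_fact_pi L x (by
      intro e he
      apply h
      have h2 : ∀ j, a j • e = 0 := fun j => congrFun he j
      intro r hr
      rw [← ha] at hr
      induction hr using Submodule.span_induction with
      | mem x hx => obtain ⟨j, rfl⟩ := hx; exact h2 j
      | zero => simp
      | add x y _ _ hx hy => rw [add_smul, hx, hy, add_zero]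
      | smul r x _ hx => rw [smul_assoc, hx, smul_zero])
    have : x = ∑ j, a j • ψ j := by
      ext e
      rw [hψ, aux_sum_apply]
      rfl
    rw [this]
    exact Submodule.sum_mem _ fun j _ => Submodule.smul_mem_smul (hsp j) trivial

/-- injective implies dual flat -/
theorem aux_flat_of_inj [IsNoetherianRing R] (hE : Module.Injective R E) :
    Module.Flat R (CharacterModule E) := by
  refine Module.Flat.of_forall_isTrivialRelation ?_
  intro l f x hx
  let s : (Fin l → R) →ₗ[R] R := ∑ i, f i • LinearMap.proj i
  have hs : ∀ c, s c = ∑ i, f i * c i := by intro c; simp [s]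
  obtain ⟨m, a, ha⟩ := Submodule.fg_iff_exists_fin_generating_family.1
      (IsNoetherian.noetherian (LinearMap.ker s))
  have hsa : ∀ j, a j ∈ LinearMap.ker s := fun j => ha ▸ Submodule.subset_span ⟨j, rfl⟩
  let L : (Fin l → E) →ₗ[R] (Fin m → E) :=
    LinearMap.pi (fun j => ∑ i, a j i • LinearMap.proj i)
  have hL : ∀ v j, L v j = ∑ i, a j i • v i := by intro v j; simp [L]
  let φ : CharacterModule (Fin l → E) := ∑ i, dual (LinearMap.proj (R := R) (φ := fun _ => E) i) (x i)
  have hφ : ∀ v, φ v = ∑ i, x i (v i) := by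
    intro v
    simp only [φ]
    rw [aux_sum_apply]; rfl
  obtain ⟨ψ, hψ⟩ := aux_fact_pi L φ (by
    intro v hv
    -- find e with f i • e = v i
    let V : (Fin l → R) →ₗ[R] E := ∑ i, (LinearMap.proj (R := R) i).smulRight (v i)
    have hV : ∀ c, V c = ∑ i, c i • v i := by intro c; simp [V]
    have hk : LinearMap.ker s ≤ LinearMap.ker V := by
      rw [← ha, Submodule.span_le]
      rintro _ ⟨j, rfl⟩
      have := congrFun hv j
      rw [hL] at this
      change V (a j) = 0
      rw [hV, this]; rfl
    obtain ⟨g, hg⟩ := hE.out ((LinearMap.ker s).liftQ s le_rfl)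
      (by rw [← LinearMap.ker_eq_bot]; exact Submodule.ker_liftQ_eq_bot _ _ _ le_rfl)
      ((LinearMap.ker s).liftQ V hk)
    have hg2 : ∀ c, g (s c) = V c := fun c => hg ((LinearMap.ker s).mkQ c)
    have hv2 : ∀ i, v i = f i • g 1 := by
      intro i
      have h1 := hg2 (Pi.single i 1)
      rw [hs, hV] at h1
      simp [Pi.single_apply] at h1
      rw [← h1, ← map_smul, smul_eq_mul, mul_one]
    rw [hφ]
    have := congr($hx (g 1))
    rw [aux_sum_apply] at this
    simp only [CharacterModule.smul_apply] at this
    simp only [hv2]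
    exact this)
  refine ⟨m, fun i j => a j i, ψ, ?_, ?_⟩
  · intro i
    ext e
    have h1 := hψ (Pi.single i e)
    rw [hφ] at h1
    rw [Finset.sum_eq_single i (by
      intro b _ hb; rw [Pi.single_eq_of_ne hb, map_zero]) (by simp), Pi.single_eq_same] at h1
    rw [h1, aux_sum_apply]
    refine Finset.sum_congr rfl fun j _ => ?_
    rw [CharacterModule.smul_apply, hL]
    congr 1
    rw [Finset.sum_eq_single i (by
      intro b _ hb; rw [Pi.single_eq_of_ne hb, smul_zero]) (by simp), Pi.single_eq_same]
  · intro j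
    rw [← hs]; exact hsa j

/-- dual flat implies injective -/
theorem aux_inj_of_flat [IsNoetherianRing R] (hE : Module.Flat R (CharacterModule E)) :
    Module.Injective R E := by
  refine Module.Baer.injective ?_
  intro I g
  obtain ⟨n, a, ha⟩ := Submodule.fg_iff_exists_fin_generating_family.1
      ((isNoetherianRing_iff_ideal_fg R).1 inferInstance I)
  have hsp : ∀ j, a j ∈ I := fun j => ha ▸ Submodule.subset_span ⟨j, rfl⟩
  let L : E →ₗ[R] (Fin n → E) := LinearMap.pi (fun j => LinearMap.lsmul R E (a j))
  let w : Fin n → E := fun j => g ⟨a j, hsp j⟩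
  have key : w ∈ LinearMap.range L := by
    by_contra hw
    have hne : (LinearMap.range L).mkQ w ≠ 0 := by
      simpa [Submodule.Quotient.mk_eq_zero] using hw
    obtain ⟨c, hc⟩ := exists_character_apply_ne_zero_of_ne_zero hne
    let φ : Fin n → CharacterModule E := fun j =>
      dual ((LinearMap.range L).mkQ ∘ₗ LinearMap.single R (fun _ => E) j) c
    have hφ : ∀ v : Fin n → E, c ((LinearMap.range L).mkQ v) = ∑ j, φ j (v j) := by
      intro v
      conv_lhs => rw [← Finset.univ_sum_single v]
      rw [map_sum, map_sum]
      rfl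
    have hrel : ∑ j, a j • φ j = 0 := by
      ext e
      rw [aux_sum_apply]
      have h1 := hφ (L e)
      have h2 : (LinearMap.range L).mkQ (L e) = 0 := by simp
      rw [h2, map_zero] at h1
      exact h1.symm
    obtain ⟨k, b, y, hb, hb2⟩ := Module.Flat.isTrivialRelation_of_sum_smul_eq_zero hrel
    apply hc
    rw [hφ]
    simp only [hb, aux_sum_apply, CharacterModule.smul_apply]
    rw [Finset.sum_comm]
    refine Finset.sum_eq_zero fun j _ => ?_
    rw [← map_sum]
    have : ∑ i, b i j • w i = 0 := by
      simp only [w, ← map_smul]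
      rw [← map_sum]
      convert map_zero g
      ext
      simp only [AddSubmonoidClass.coe_finsetSum, Submodule.coe_smul, smul_eq_mul,
        ZeroMemClass.coe_zero]
      rw [← hb2 j]
      exact Finset.sum_congr rfl fun i _ => mul_comm _ _
    rw [this, map_zero]
  obtain ⟨e, he⟩ := key
  have he2 : ∀ j, a j • e = g ⟨a j, hsp j⟩ := fun j => congrFun he j
  refine ⟨LinearMap.toSpanSingleton R E e, ?_⟩
  intro x hx
  rw [LinearMap.toSpanSingleton_apply]
  have hx' := hx
  rw [← ha, Submodule.mem_span_range_iff_exists_fun] at hx'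
  obtain ⟨c, rfl⟩ := hx'
  have : (⟨∑ i, c i • a i, hx⟩ : I) = ∑ i, c i • ⟨a i, hsp i⟩ := by
    ext; simp
  rw [this, map_sum, Finset.sum_smul]
  refine Finset.sum_congr rfl fun i _ => ?_
  rw [map_smul, ← he2, smul_assoc]

theorem aux_precover {M : Type u} [AddCommGroup M] [Module R M] (i : M →ₗ[R] E)
    (hi : Function.Injective i) (hE : Module.Flat R (CharacterModule E)) :
    IsFlatPrecover R (dual i) := by
  refine ⟨hE, ?_⟩
  intro F' _ _ hF g
  obtain ⟨ψ, hψ⟩ := dual_surjective_of_injective (i.lTensor F')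
    (Module.Flat.lTensor_preserves_injective_linearMap i hi) (homEquiv g)
  refine ⟨homEquiv.symm ψ, ?_⟩
  ext x m
  exact congr($hψ (x ⊗ₜ[R] m))

theorem aux_surj {M : Type u} [AddCommGroup M] [Module R M] (i : M →ₗ[R] E)
    (h : IsFlatPrecover R (dual i)) : Function.Injective i := by
  rw [← dual_surjective_iff_injective (R := R)]
  intro c
  obtain ⟨k, hk⟩ := h.2 R inferInstance (LinearMap.toSpanSingleton R _ c)
  refine ⟨k 1, ?_⟩
  have := congr($hk 1)
  simpa using this

theorem aux_env_of_cover {M : Type u} [AddCommGroup M] [Module R M] [IsNoetherianRing R]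
    (i : M →ₗ[R] E) (h : IsFlatCover R (dual i)) : IsInjectiveEnvelope R i := by
  have hE := aux_inj_of_flat h.1.1
  have hi := aux_surj i h.1
  refine ⟨hE, hi, ?_⟩
  intro N hN hd
  apply hN
  have hinj : Function.Injective (N.mkQ ∘ₗ i) := by
    rw [injective_iff_map_eq_zero]
    intro m hm
    have : i m ∈ N := by simpa [Submodule.Quotient.mk_eq_zero] using hm
    have : i m ∈ N ⊓ LinearMap.range i := ⟨this, m, rfl⟩
    rw [hd, Submodule.mem_bot] at this
    exact hi (by rw [this, map_zero])
  obtain ⟨k, hk⟩ := hE.out (N.mkQ ∘ₗ i) hinj i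
  have := h.2 (dual (k ∘ₗ N.mkQ)) (by
    rw [← dual_comp]
    congr 1
    ext m
    exact hk m)
  rw [dual_bijective_iff_bijective] at this
  rw [eq_bot_iff]
  intro x hx
  rw [Submodule.mem_bot]
  apply this.1
  rw [map_zero, LinearMap.comp_apply, (by simpa using hx : N.mkQ x = 0), map_zero]

end

section
variable {R}
variable {M E : Type u} [AddCommGroup M] [Module R M] [AddCommGroup E] [Module R E]

theorem aux_colon [IsNoetherianRing R] (hE : Module.Injective R E) (I : Ideal R) (a : R)
    (w : CharacterModule E) (hw : a • w ∈ I • (⊤ : Submodule R (CharacterModule E))) :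
    w ∈ (Submodule.comap (LinearMap.lsmul R R a) I : Ideal R) •
      (⊤ : Submodule R (CharacterModule E)) := by
  rw [aux_mem] at hw ⊢
  intro e he
  let J : Submodule R R := Submodule.comap (LinearMap.lsmul R R a) I
  let f : (R ⧸ J) →ₗ[R] (R ⧸ (I : Submodule R R)) := J.mapQ I (LinearMap.lsmul R R a) le_rfl
  have hf : Function.Injective f := by
    rw [injective_iff_map_eq_zero]
    intro x hx
    obtain ⟨r, rfl⟩ := J.mkQ_surjective x
    have h1 : (Submodule.mkQ (I : Submodule R R)) (a * r) = 0 := hx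
    have h2 : a * r ∈ I := by
      exact (Submodule.Quotient.mk_eq_zero _).1 h1
    have h3 : r ∈ J := h2
    exact (Submodule.Quotient.mk_eq_zero _).2 h3
  obtain ⟨g, hg⟩ := hE.out f hf (J.liftQ (LinearMap.toSpanSingleton R E e) (by
    intro r hr
    rw [LinearMap.mem_ker, LinearMap.toSpanSingleton_apply]
    exact he r hr))
  let q : R →ₗ[R] (R ⧸ (I : Submodule R R)) := Submodule.mkQ I
  have h1 : ∀ r, g (q (a * r)) = r • e := by
    intro r
    exact hg (J.mkQ r)
  have h2 : a • g (q 1) = e := by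
    rw [← map_smul, ← map_smul, smul_eq_mul, h1, one_smul]
  rw [← h2, ← CharacterModule.smul_apply]
  apply hw
  intro r hr
  rw [← map_smul, ← map_smul]
  have : q (r • 1) = 0 := by
    have : r • (1 : R) ∈ I := by simpa using hr
    exact (Submodule.Quotient.mk_eq_zero _).2 this
  rw [this, map_zero]

set_option maxHeartbeats 4000000 in
theorem aux_auto [IsNoetherianRing R] (i : M →ₗ[R] E) (hi : IsInjectiveEnvelope R i)
    (h : CharacterModule E →ₗ[R] CharacterModule E) (hh : dual i ∘ₗ h = dual i) :
    Function.Bijective h := by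
  obtain ⟨hE, hinj, hess⟩ := hi
  have hM : ∀ (φ : CharacterModule E) (e : E), e ∈ LinearMap.range i → h φ e = φ e := by
    rintro φ _ ⟨m, rfl⟩
    exact congr($hh φ m)
  have hpres : ∀ (I : Ideal R) (x : CharacterModule E),
      x ∈ I • (⊤ : Submodule R (CharacterModule E)) →
      h x ∈ I • (⊤ : Submodule R (CharacterModule E)) := by
    intro I x hx
    refine Submodule.smul_induction_on hx ?_ ?_
    · intro r hr n _
      rw [map_smul]
      exact Submodule.smul_mem_smul hr trivial
    · intro a b ha hb
      rw [map_add]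
      exact Submodule.add_mem _ ha hb
  have hsup : ∀ (I : Ideal R) (a : R) (x : CharacterModule E),
      x ∈ (I ⊔ Ideal.span {a}) • (⊤ : Submodule R (CharacterModule E)) →
      ∃ y ∈ I • (⊤ : Submodule R (CharacterModule E)), ∃ z, x = y + a • z := by
    intro I a x hx
    rw [Submodule.sup_smul, Submodule.mem_sup] at hx
    obtain ⟨y, hy, z, hz, rfl⟩ := hx
    rw [Submodule.ideal_span_singleton_smul] at hz
    obtain ⟨w, _, hw⟩ := (Submodule.mem_smul_pointwise_iff_exists _ _ _).1 hz
    exact ⟨y, hy, w, by rw [hw]⟩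
  have main : ∀ I : Ideal R,
      (∀ y, ∃ x, h x - y ∈ I • (⊤ : Submodule R (CharacterModule E))) ∧
      (∀ x, h x ∈ I • (⊤ : Submodule R (CharacterModule E)) →
        x ∈ I • (⊤ : Submodule R (CharacterModule E))) := by
    intro I
    induction I using IsNoetherian.induction with
    | hgt I IH =>
    by_cases hp : Ideal.IsPrime I
    · have hlt : ∀ s, s ∉ I → I < I ⊔ Ideal.span {s} := by
        intro s hs
        refine lt_of_le_of_ne le_sup_left ?_
        intro heq
        apply hs
        rw [heq]
        exact Ideal.mem_sup_right (Ideal.mem_span_singleton_self s)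
      have key : ∀ y : CharacterModule E,
          (∀ J : Ideal R, I < J → y ∈ J • (⊤ : Submodule R (CharacterModule E))) →
          h y - y ∈ I • (⊤ : Submodule R (CharacterModule E)) := by
        intro y hy
        rw [aux_mem]
        intro e he
        by_cases hex : ∃ s, s ∉ I ∧ s • e ∈ LinearMap.range i
        · obtain ⟨s, hs, hse⟩ := hex
          obtain ⟨u, hu, z, rfl⟩ := hsup I s y (hy _ (hlt s hs))
          have h1 := (aux_mem I _).1 hu e he
          have h2 := (aux_mem I _).1 (hpres I u hu) e he
          rw [map_add, map_smul, aux_sub_apply, aux_add_apply, aux_add_apply, h1, h2,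
            CharacterModule.smul_apply, CharacterModule.smul_apply, hM _ _ hse]
          simp
        · exfalso
          apply hex
          by_cases he0 : e = 0
          · refine ⟨1, fun h1 => hp.ne_top ((Ideal.eq_top_iff_one _).2 h1), ?_⟩
            rw [he0, smul_zero]; exact Submodule.zero_mem _
          · have := hess (R ∙ e) (by simpa using he0)
            obtain ⟨v, ⟨hv1, hv2⟩, hv0⟩ := Submodule.exists_mem_ne_zero_of_ne_bot this
            obtain ⟨s, rfl⟩ := Submodule.mem_span_singleton.1 hv1
            exact ⟨s, fun hs => hv0 (he s hs), hv2⟩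
      refine ⟨?_, ?_⟩
      · intro y
        have hx : ∀ J : Ideal R, ∃ x, I < J →
            h x - y ∈ J • (⊤ : Submodule R (CharacterModule E)) := by
          intro J
          by_cases hJ : I < J
          · obtain ⟨x, hx⟩ := (IH J hJ).1 y
            exact ⟨x, fun _ => hx⟩
          · exact ⟨0, fun h => absurd h hJ⟩
        choose X hX using hx
        have hcons : ∀ J J' : Ideal R, I < J → J ≤ J' →
            X J - X J' ∈ J' • (⊤ : Submodule R (CharacterModule E)) := by
          intro J J' hJ hJJ
          apply (IH J' (hJ.trans_le hJJ)).2
          have h1 := Submodule.smul_mono_left (N := (⊤ : Submodule R (CharacterModule E))) hJJ (hX J hJ)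
          have h2 := hX J' (hJ.trans_le hJJ)
          have h3 := Submodule.sub_mem _ h1 h2
          rw [map_sub]
          convert h3 using 1
          abel
        have hcons' : ∀ (J J' : Ideal R) (e : E), I < J → J ≤ J' → (∀ r ∈ J', r • e = 0) →
            X J e = X J' e := by
          intro J J' e hJ hJJ he
          have := (aux_mem _ _).1 (hcons J J' hJ hJJ) e he
          rwa [aux_sub_apply, sub_eq_zero] at this
        let ann : E → Ideal R := fun e => LinearMap.ker (LinearMap.toSpanSingleton R E e)
        have hann : ∀ e r, r ∈ ann e ↔ r • e = 0 := by
          intro e r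
          rw [LinearMap.mem_ker, LinearMap.toSpanSingleton_apply]
        have hinf : ∀ J J' : Ideal R, I < J → I < J' → I < J ⊓ J' := by
          intro J J' hJ hJ'
          obtain ⟨hle, s, hs, hsI⟩ := SetLike.lt_iff_le_and_exists.1 hJ
          obtain ⟨hle', t, ht, htI⟩ := SetLike.lt_iff_le_and_exists.1 hJ'
          refine SetLike.lt_iff_le_and_exists.2 ⟨le_inf hle hle', s * t, ⟨?_, ?_⟩, ?_⟩
          · exact J.mul_mem_right _ hs
          · exact J'.mul_mem_left _ ht
          · intro hst
            exact (hp.mem_or_mem hst).elim hsI htI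
        let T : AddSubgroup E :=
          { carrier := {e | I < ann e}
            zero_mem' := by
              have : ann 0 = ⊤ := by
                rw [Ideal.eq_top_iff_one, hann, smul_zero]
              change I < ann 0
              rw [this]
              exact lt_top_iff_ne_top.2 hp.ne_top
            add_mem' := by
              intro a b ha hb
              refine lt_of_lt_of_le (hinf _ _ ha hb) ?_
              rintro r ⟨hra, hrb⟩
              rw [hann, smul_add, (hann a r).1 hra, (hann b r).1 hrb, add_zero]
            neg_mem' := by
              intro a ha
              refine lt_of_lt_of_le (show I < ann a from ha) ?_
              intro r hra
              rw [hann, smul_neg, (hann a r).1 hra, neg_zero] }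
        let x0 : T →+ AddCircle (1 : ℚ) := AddMonoidHom.mk' (fun e => X (ann e) (e : E)) (by
          intro a b
          have hJ := hinf _ _ a.2 b.2
          have ha := hcons' (ann a ⊓ ann b) (ann a) a hJ inf_le_left (fun r hr => (hann _ r).1 hr)
          have hb := hcons' (ann a ⊓ ann b) (ann b) b hJ inf_le_right (fun r hr => (hann _ r).1 hr)
          have hab := hcons' (ann a ⊓ ann b) (ann (a + b : T)) (a + b : T) hJ (by
            rintro r ⟨hra, hrb⟩
            rw [hann, AddSubgroup.coe_add, smul_add, (hann a r).1 hra, (hann b r).1 hrb, add_zero])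
            (fun r hr => (hann _ r).1 hr)
          rw [← ha, ← hb, ← hab, AddSubgroup.coe_add, map_add])
        obtain ⟨x, hx⟩ := dual_surjective_of_injective (T.subtype.toIntLinearMap)
          T.subtype_injective x0
        have hx1 : ∀ e : E, I < ann e → x e = X (ann e) e := by
          intro e he
          exact congr($hx ⟨e, he⟩)
        have hx2 : ∀ J : Ideal R, I < J →
            h x - y ∈ J • (⊤ : Submodule R (CharacterModule E)) := by
          intro J hJ
          have h1 : x - X J ∈ J • (⊤ : Submodule R (CharacterModule E)) := by
            rw [aux_mem]
            intro e he
            have hle : J ≤ ann e := fun r hr => (hann e r).2 (he r hr)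
            rw [aux_sub_apply, hx1 e (hJ.trans_le hle), sub_eq_zero]
            exact (hcons' J (ann e) e hJ hle (fun r hr => (hann _ r).1 hr)).symm
          have h2 := Submodule.add_mem _ (hpres _ _ h1) (hX J hJ)
          rw [map_sub] at h2
          convert h2 using 1
          abel
        have h3 := key _ hx2
        refine ⟨x - (h x - y), ?_⟩
        rw [map_sub]
        have h4 := Submodule.neg_mem _ h3
        convert h4 using 1
        abel
      · intro x hx
        have h1 := key x (fun J hJ => (IH J hJ).2 x (Submodule.smul_mono_left hJ.le hx))
        have h2 := Submodule.sub_mem _ hx h1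
        convert h2 using 1
        abel
    · rw [Ideal.not_isPrime_iff] at hp
      rcases hp with rfl | ⟨a, ha, b, hb, hab⟩
      · rw [Submodule.top_smul]
        exact ⟨fun y => ⟨0, trivial⟩, fun _ _ => trivial⟩
      · let J : Ideal R := I ⊔ Ideal.span {a}
        let J' : Ideal R := Submodule.comap (LinearMap.lsmul R R a) I
        have hJ : I < J := by
          refine SetLike.lt_iff_le_and_exists.2 ⟨le_sup_left, a, ?_, ha⟩
          exact Ideal.mem_sup_right (Ideal.mem_span_singleton_self a)
        have hJ' : I < J' := by
          refine SetLike.lt_iff_le_and_exists.2 ⟨?_, b, hab, hb⟩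
          intro r hr
          exact Ideal.mul_mem_left I a hr
        have haJ' : ∀ x ∈ J' • (⊤ : Submodule R (CharacterModule E)),
            a • x ∈ I • (⊤ : Submodule R (CharacterModule E)) := by
          intro x hx
          refine Submodule.smul_induction_on hx ?_ ?_
          · intro r hr n _
            rw [← mul_smul]
            exact Submodule.smul_mem_smul hr trivial
          · intro u v hu hv
            rw [smul_add]
            exact Submodule.add_mem _ hu hv
        refine ⟨?_, ?_⟩
        · intro y
          obtain ⟨x, hx⟩ := (IH J hJ).1 y
          obtain ⟨u, hu, z, hz⟩ := hsup I a _ hx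
          obtain ⟨w, hw⟩ := (IH J' hJ').1 z
          refine ⟨x - a • w, ?_⟩
          have h1 := Submodule.sub_mem _ hu (haJ' _ hw)
          convert h1 using 1
          rw [map_sub, map_smul, sub_right_comm, hz, smul_sub]
          abel
        · intro x hx
          have h1 := (IH J hJ).2 x (Submodule.smul_mono_left hJ.le hx)
          obtain ⟨u, hu, z, rfl⟩ := hsup I a _ h1
          have h2 := Submodule.sub_mem _ hx (hpres _ _ hu)
          rw [map_add, add_sub_cancel_left, map_smul] at h2
          have h3 := (IH J' hJ').2 z (aux_colon hE I a _ h2)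
          exact Submodule.add_mem _ hu (haJ' _ h3)
  obtain ⟨h1, h2⟩ := main ⊥
  simp only [Submodule.bot_smul, Submodule.mem_bot] at h1 h2
  refine ⟨(injective_iff_map_eq_zero h).2 h2, fun y => ?_⟩
  obtain ⟨x, hx⟩ := h1 y
  exact ⟨x, sub_eq_zero.1 hx⟩

end

section
variable {R}

theorem aux_id_env {E : Type u} [AddCommGroup E] [Module R E] (hE : Module.Injective R E) :
    IsInjectiveEnvelope R (LinearMap.id : E →ₗ[R] E) := by
  refine ⟨hE, Function.injective_id, fun N hN => ?_⟩
  rwa [LinearMap.range_id, inf_top_eq]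

theorem aux_dual_id {E : Type u} [AddCommGroup E] [Module R E] :
    dual (LinearMap.id : E →ₗ[R] E) = LinearMap.id := by
  ext; rfl

theorem aux_id_cover {E : Type u} [AddCommGroup E] [Module R E]
    (hE : Module.Flat R (CharacterModule E)) :
    IsFlatCover R (dual (LinearMap.id : E →ₗ[R] E)) := by
  rw [aux_dual_id]
  refine ⟨⟨hE, fun F' _ _ _ g => ⟨g, rfl⟩⟩, fun h hh => ?_⟩
  have : h = LinearMap.id := hh
  rw [this]
  exact Function.bijective_id

theorem aux_pure {P : Type u} [AddCommGroup P] [Module R P] (A : Submodule R P)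
    (hP : Module.Flat R (CharacterModule P))
    (hA : ∀ (l : ℕ) (f : Fin l → R) (p : P), (∀ i, f i • p ∈ A) → ∃ a ∈ A, ∀ i, f i • a = f i • p) :
    Module.Flat R (CharacterModule A) := by
  refine Module.Flat.of_forall_isTrivialRelation ?_
  intro l f x hx
  let φ : CharacterModule (Fin l → A) :=
    ∑ i, dual (LinearMap.proj (R := R) (φ := fun _ => A) i) (x i)
  have hφ : ∀ v, φ v = ∑ i, x i (v i) := by
    intro v
    simp only [φ]
    rw [aux_sum_apply]; rfl
  let fP : P →ₗ[R] (Fin l → P) := LinearMap.pi (fun j => LinearMap.lsmul R P (f j))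
  let inc : (Fin l → A) →ₗ[R] (Fin l → P) := LinearMap.pi (fun j => A.subtype ∘ₗ LinearMap.proj j)
  let L : (Fin l → A) →ₗ[R] ((Fin l → P) ⧸ LinearMap.range fP) := (LinearMap.range fP).mkQ ∘ₗ inc
  obtain ⟨ψ, hψ⟩ := aux_fact L φ (by
    intro v hv
    have h1 : inc v ∈ LinearMap.range fP := by
      simpa [L, Submodule.Quotient.mk_eq_zero] using hv
    obtain ⟨p, hp⟩ := h1
    have h2 : ∀ j, f j • p = v j := fun j => congrFun hp j
    obtain ⟨a, ha, ha2⟩ := hA l f p (fun j => by rw [h2]; exact (v j).2)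
    rw [hφ]
    have h3 := congr($hx ⟨a, ha⟩)
    rw [aux_sum_apply] at h3
    rw [← aux_zero_apply (⟨a, ha⟩ : A), ← h3]
    refine Finset.sum_congr rfl fun j _ => ?_
    rw [CharacterModule.smul_apply]
    congr 1
    ext
    rw [← h2, ← ha2]; rfl)
  let y : Fin l → CharacterModule P := fun j =>
    dual ((LinearMap.range fP).mkQ ∘ₗ LinearMap.single R (fun _ => P) j) ψ
  have hy : ∀ v : Fin l → P, ψ ((LinearMap.range fP).mkQ v) = ∑ j, y j (v j) := by
    intro v
    conv_lhs => rw [← Finset.univ_sum_single v]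
    rw [map_sum, map_sum]
    rfl
  have hrel : ∑ j, f j • y j = 0 := by
    ext e
    rw [aux_sum_apply]
    have h1 := hy (fP e)
    have h2 : (LinearMap.range fP).mkQ (fP e) = 0 := by simp
    rw [h2, map_zero] at h1
    exact h1.symm
  have hxy : ∀ j, x j = dual A.subtype (y j) := by
    intro j
    ext e
    have h1 := hψ (Pi.single j e)
    rw [hφ, Finset.sum_eq_single j (by
      intro b _ hb; rw [Pi.single_eq_of_ne hb, map_zero]) (by simp), Pi.single_eq_same] at h1
    rw [h1]
    change ψ _ = ψ ((LinearMap.range fP).mkQ (Pi.single j (e : P)))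
    congr 1
    change (LinearMap.range fP).mkQ _ = _
    congr 1
    ext k
    change ((Pi.single j e : Fin l → A) k : P) = _
    by_cases hk : k = j
    · subst hk; simp
    · simp [Pi.single_eq_of_ne hk]
  obtain ⟨k, b, z, hb, hb2⟩ := Module.Flat.isTrivialRelation_of_sum_smul_eq_zero hrel
  refine ⟨k, b, fun j => dual A.subtype (z j), ?_, hb2⟩
  intro j
  rw [hxy, hb, map_sum]
  simp only [map_smul]

theorem aux_exists_inj (M : Type u) [AddCommGroup M] [Module R M] :
    ∃ (E : Type u) (_ : AddCommGroup E) (_ : Module R E) (j : M →ₗ[R] E),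
      Module.Injective R E ∧ Function.Injective j := by
  let J := CategoryTheory.Injective.under (ModuleCat.of R M)
  refine ⟨J, inferInstance, inferInstance, (CategoryTheory.Injective.ι (ModuleCat.of R M)).hom,
    ?_, ?_⟩
  · have : CategoryTheory.Injective (ModuleCat.of R J) :=
      inferInstanceAs (CategoryTheory.Injective (CategoryTheory.Injective.under (ModuleCat.of R M)))
    exact Module.injective_module_of_injective_object R J
  · exact (ModuleCat.mono_iff_injective _).1 inferInstance

theorem aux_noeth
    (h : ∀ (E : Type u) [AddCommGroup E] [Module R E],
      Module.Injective R E ↔ Module.Flat R (CharacterModule E)) : IsNoetherianRing R := by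
  classical
  rw [isNoetherianRing_iff, ← monotone_stabilizes_iff_noetherian]
  intro I
  choose E i1 i2 j hE hj using fun n : ℕ => aux_exists_inj (R := R) (R ⧸ (I n))
  have hP : Module.Injective R (∀ n, E n) := by
    refine ⟨fun X Y _ _ _ _ f hf g => ?_⟩
    choose k hk using fun n => (hE n).out f hf (LinearMap.proj n ∘ₗ g)
    exact ⟨LinearMap.pi k, fun x => funext fun n => hk n x⟩
  let A : Submodule R (∀ n, E n) :=
    { carrier := {v | ∃ N, ∀ n, N ≤ n → v n = 0}
      zero_mem' := ⟨0, fun _ _ => rfl⟩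
      add_mem' := by
        rintro a b ⟨N, hN⟩ ⟨N', hN'⟩
        refine ⟨max N N', fun n hn => ?_⟩
        rw [Pi.add_apply, hN n (le_of_max_le_left hn), hN' n (le_of_max_le_right hn), add_zero]
      smul_mem' := by
        rintro c a ⟨N, hN⟩
        refine ⟨N, fun n hn => ?_⟩
        rw [Pi.smul_apply, hN n hn, smul_zero] }
  have hA : Module.Injective R A := by
    rw [h]
    refine aux_pure A ((h _).1 hP) ?_
    intro l f p hp
    choose N hN using hp
    let K := Finset.univ.sup N
    refine ⟨fun n => if n < K then p n else 0, ⟨K, fun n hn => if_neg hn.not_gt⟩, ?_⟩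
    intro i
    ext n
    rw [Pi.smul_apply, Pi.smul_apply]
    by_cases hn : n < K
    · rw [if_pos hn]
    · rw [if_neg hn, smul_zero]
      exact (hN i n ((Finset.le_sup (Finset.mem_univ i)).trans (not_lt.1 hn))).symm
  let U : Submodule R R := ⨆ n, I n
  have hU : ∀ r, r ∈ U ↔ ∃ n, r ∈ I n := fun r =>
    Submodule.mem_iSup_of_directed _ I.monotone.directed_le
  let g0 : R →ₗ[R] (∀ n, E n) := LinearMap.pi (fun n => j n ∘ₗ (I n).mkQ)
  have hg0 : ∀ r n, g0 r n = 0 ↔ r ∈ I n := by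
    intro r n
    change j n ((I n).mkQ r) = 0 ↔ _
    rw [map_eq_zero_iff _ (hj n)]
    exact Submodule.Quotient.mk_eq_zero _
  let g : U →ₗ[R] A := (g0 ∘ₗ U.subtype).codRestrict A (by
    rintro ⟨r, hr⟩
    obtain ⟨N, hN⟩ := (hU r).1 hr
    exact ⟨N, fun n hn => (hg0 r n).2 (I.monotone hn hN)⟩)
  obtain ⟨g', hg'⟩ := hA.out U.subtype U.injective_subtype g
  obtain ⟨N, hN⟩ := (g' 1).2
  refine ⟨N, fun m hm => le_antisymm (I.monotone hm) ?_⟩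
  intro r hr
  have hrU : r ∈ U := (hU r).2 ⟨m, hr⟩
  rw [← hg0]
  have h1 : g0 r = (g' r : ∀ n, E n) := congrArg Subtype.val (hg' ⟨r, hrU⟩).symm
  have h2 : g' r = r • g' 1 := by rw [← map_smul, smul_eq_mul, mul_one]
  rw [h1, h2, Submodule.coe_smul, Pi.smul_apply, hN N le_rfl, smul_zero]

end

/-- A commutative ring `S` is Noetherian iff for every morphism `i` of
`S`-modules, `i` is an injective envelope precisely when the character module dual
`i⁺ = Hom_ℤ(i, ℚ/ℤ)` is a flat cover. -/
theorem isNoetherianRing_iff_injectiveEnvelope_iff_characterDual_flatCover :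
    IsNoetherianRing R ↔
      ∀ (M I : Type u) [AddCommGroup M] [AddCommGroup I] [Module R M] [Module R I]
        (i : M →ₗ[R] I),
        (IsInjectiveEnvelope R i ↔ IsFlatCover R (CharacterModule.dual i)) := by
  constructor
  · intro _ M I _ _ _ _ i
    refine ⟨fun hi => ⟨?_, ?_⟩, aux_env_of_cover i⟩
    · exact aux_precover i hi.2.1 (aux_flat_of_inj hi.1)
    · exact fun h hh => aux_auto i hi h hh
  · intro H
    refine aux_noeth fun E _ _ => ⟨fun hE => ?_, fun hE => ?_⟩
    · exact ((H E E LinearMap.id).1 (aux_id_env hE)).1.1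
    · exact ((H E E LinearMap.id).2 (aux_id_cover hE)).1
end
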